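/- arXiv:2509.15158 — 4 statements merged into one kernel-verified Lean document; each statement's English description precedes it below -/
import Mathlib

section
/- Fix parameters α ∈ (0,1), c ∈ (0,1), κ > 0 with c + κ·c^{α+1} = 1, and define c_0 = 1 and, for n ≥ 0, c_{n+1} as the unique point of [0,c] with g(c_{n+1}) = c_n, where g(x) = x + κ·x^{α+1}. Then for every n ≥ 1 one has n^{1/α}·c_n ≤ max{ c, κ^{−1/α}·2^{1/α + 1/α²} }, and moreover max{ c, κ^{−1/α}·2^{1/α + 1/α²} } ≤ c + c·(c/(1−c))^{1/α}·2^{1/α + 1/α²}. -/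
/-!
The bound on `n ^ (1/α) * c_n` is proved by induction on `n`. Write `M` for the maximum and
`x = c_{n+1}`. If `(n+1) ^ (1/α) * x > M`, then raising to the power `α` gives
`κ * (n+1) * x ^ α ≥ κ * M ^ α ≥ 2 ^ (1/α + 1)`. Convexity of `t ↦ t ^ (1/α)` on `[1, 2]` gives
`(1 + 1/n) ^ (1/α) ≤ 1 + 2 ^ (1/α + 1) / (n+1)` (`add_one_rpow_le`), hence
`(n+1) ^ (1/α) * x ≤ n ^ (1/α) * x * (1 + κ * x ^ α) = n ^ (1/α) * c_n ≤ M`, a contradiction.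

The comparison of the two constants is the identity `κ ^ (-1/α) = c * (c / (1-c)) ^ (1/α)`, obtained
by solving the parameter relation for `κ`.
-/

open Real

/-- Chord bound for the convex function `t ↦ t ^ p` on `[1, 2]` at `t = 1 + 1/m`, followed by
`1/m ≤ 2/(m+1)`. -/
lemma add_one_rpow_le {p m : ℝ} (hp : 1 ≤ p) (hm : 1 ≤ m) :
    (m + 1) ^ p ≤ m ^ p * (1 + 2 ^ (p + 1) / (m + 1)) := by
  have hm0 : 0 < m := by linarith
  have ht1 : 1 / m ≤ 1 := by rw [div_le_one hm0]; exact hm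
  have hconv := (convexOn_rpow hp).2 (show (1:ℝ) ∈ Set.Ici 0 by simp)
    (show (2:ℝ) ∈ Set.Ici 0 by simp) (show 0 ≤ 1 - 1 / m by linarith)
    (show 0 ≤ 1 / m by positivity) (by ring)
  simp only [smul_eq_mul, one_rpow] at hconv
  have h2 : (0:ℝ) < 2 ^ p := by positivity
  have hfrac : 1 / m ≤ 2 / (m + 1) := by
    rw [div_le_div_iff₀ hm0 (by linarith)]; linarith
  have hchord : (1 - 1 / m) * 1 + 1 / m * 2 ^ p ≤ 1 + 2 ^ (p + 1) / (m + 1) := by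
    have h3 : (2:ℝ) ^ (p + 1) / (m + 1) = 2 / (m + 1) * 2 ^ p := by
      rw [rpow_add two_pos, rpow_one]; ring
    rw [h3]
    have h4 := mul_le_mul_of_nonneg_right hfrac h2.le
    have h5 : 0 < 1 / m := by positivity
    linarith
  have hsplit : m + 1 = m * ((1 - 1 / m) * 1 + 1 / m * 2) := by field_simp; ring
  calc (m + 1) ^ p = m ^ p * ((1 - 1 / m) * 1 + 1 / m * 2) ^ p := by
        rw [← mul_rpow hm0.le (by linarith [show 0 < 1 / m by positivity]), ← hsplit]
    _ ≤ _ := mul_le_mul_of_nonneg_left (hconv.trans hchord) (by positivity)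

/-- For the generalized LSV map with parameters `α ∈ (0,1)`, `c ∈ (0,1)`,
`κ > 0` satisfying `c + κ * c ^ (α + 1) = 1`, the sequence `c_n` defined by `c_0 = 1` and
`g (c_{n+1}) = c_n` with `c_{n+1} ∈ [0, c]`, where `g x = x + κ * x ^ (α + 1)`, satisfies
`n ^ (1/α) * c_n ≤ max (c, κ^{-1/α} * 2^{1/α + 1/α²})` for all `n ≥ 1`, and
`max (c, κ^{-1/α} * 2^{1/α + 1/α²}) ≤ c + c * (c/(1-c))^{1/α} * 2^{1/α + 1/α²}`. -/
theorem stmt0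
    (α c κ : ℝ)
    (hα : α ∈ Set.Ioo (0:ℝ) 1) (hc : c ∈ Set.Ioo (0:ℝ) 1) (hκ : 0 < κ)
    (hparam : c + κ * c ^ (α + 1) = 1)
    (cseq : ℕ → ℝ)
    (hc0 : cseq 0 = 1)
    (hcseq : ∀ n : ℕ, cseq (n + 1) ∈ Set.Icc (0:ℝ) c ∧
      cseq (n + 1) + κ * (cseq (n + 1)) ^ (α + 1) = cseq n) :
    (∀ n : ℕ, 1 ≤ n →
      (n : ℝ) ^ (1 / α) * cseq n ≤
        max c (κ ^ (-(1 / α)) * 2 ^ (1 / α + 1 / α ^ 2))) ∧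
    max c (κ ^ (-(1 / α)) * 2 ^ (1 / α + 1 / α ^ 2)) ≤
      c + c * (c / (1 - c)) ^ (1 / α) * 2 ^ (1 / α + 1 / α ^ 2) := by
  obtain ⟨hα0, hα1⟩ := hα
  obtain ⟨hc_pos, hc1⟩ := hc
  have hp : 1 ≤ 1 / α := by rw [le_div_iff₀ hα0]; linarith
  constructor
  · set M := max c (κ ^ (-(1 / α)) * 2 ^ (1 / α + 1 / α ^ 2)) with hM
    have hM0 : 0 < M := lt_of_lt_of_le hc_pos (le_max_left _ _)
    have hMα : (2:ℝ) ^ (1 / α + 1) ≤ κ * M ^ α := by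
      have h1 : (κ ^ (-(1 / α)) * 2 ^ (1 / α + 1 / α ^ 2)) ^ α ≤ M ^ α :=
        rpow_le_rpow (by positivity) (le_max_right _ _) hα0.le
      rw [mul_rpow (by positivity) (by positivity), ← rpow_mul hκ.le, ← rpow_mul two_pos.le,
        show -(1 / α) * α = -1 by field_simp,
        show (1 / α + 1 / α ^ 2) * α = 1 / α + 1 by field_simp; ring, rpow_neg_one] at h1
      calc (2:ℝ) ^ (1 / α + 1) = κ * (κ⁻¹ * 2 ^ (1 / α + 1)) := by field_simp
        _ ≤ _ := mul_le_mul_of_nonneg_left h1 hκ.le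
    intro n hn
    induction n, hn using Nat.le_induction with
    | base =>
      simp only [Nat.cast_one, one_rpow, one_mul]
      exact (hcseq 0).1.2.trans (le_max_left _ _)
    | succ n hn ih =>
      obtain ⟨⟨hx0, -⟩, hrec⟩ := hcseq n
      by_contra! hlt
      set x := cseq (n + 1) with hx
      have hn1 : (1:ℝ) ≤ n := by exact_mod_cast hn
      have hn0 : (0:ℝ) < (n:ℝ) + 1 := by linarith
      push_cast at hlt
      have hpow : M ^ α ≤ ((n:ℝ) + 1) * x ^ α := by
        have h1 := rpow_le_rpow hM0.le hlt.le hα0.le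
        rwa [mul_rpow (by positivity) hx0, ← rpow_mul hn0.le,
          show 1 / α * α = 1 by field_simp, rpow_one] at h1
      have hdiv : (2:ℝ) ^ (1 / α + 1) / ((n:ℝ) + 1) ≤ κ * x ^ α := by
        rw [div_le_iff₀ hn0]
        have h1 := mul_le_mul_of_nonneg_left hpow hκ.le
        linarith
      have hq : (0:ℝ) ≤ (n:ℝ) ^ (1 / α) := by positivity
      have hstep : ((n:ℝ) + 1) ^ (1 / α) ≤ (n:ℝ) ^ (1 / α) * (1 + κ * x ^ α) :=
        (add_one_rpow_le hp hn1).trans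
          (mul_le_mul_of_nonneg_left (by linarith) hq)
      have hcn : cseq n = (1 + κ * x ^ α) * x := by
        rw [← hrec, rpow_add_one' hx0 (by linarith)]; ring
      have hfin := mul_le_mul_of_nonneg_right hstep hx0
      rw [mul_assoc, ← hcn] at hfin
      linarith
  · have h1c : 0 < 1 - c := by linarith
    have hκinv : κ⁻¹ = c ^ α * (c / (1 - c)) := by
      rw [rpow_add_one hc_pos.ne'] at hparam
      have hcα : 0 < c ^ α := by positivity
      have h1 : 1 - c = κ * (c ^ α * c) := by linarith
      rw [h1]; field_simp
    have hκp : κ ^ (-(1 / α)) = c * (c / (1 - c)) ^ (1 / α) := by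
      rw [rpow_neg hκ.le, ← inv_rpow hκ.le, hκinv, mul_rpow (by positivity) (by positivity),
        ← rpow_mul hc_pos.le, show α * (1 / α) = 1 by field_simp, rpow_one]
    rw [hκp]
    exact max_le (le_add_of_nonneg_right (by positivity)) (le_add_of_nonneg_left hc_pos.le)
end

section
/- Fix parameters α ∈ (0,1), c ∈ (0,1), κ > 0 with c + κ·c^{α+1} = 1, and define c_0 = 1 and, for n ≥ 0, c_{n+1} as the unique point of [0,c] with g(c_{n+1}) = c_n, where g(x) = x + κ·x^{α+1}. Then c_{n−1} − c_n = κ·c_n^{α+1} for every n ≥ 1, and consequently n^{1/α + 1}·(c_{n−1} − c_n) ≤ (1 − c) + c·(c/(1−c))^{1/α}·2^{1 + 2/α + 1/α²} for every n ≥ 1. -/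
/-!
Put `w n = κ * c_n ^ α`. Since `c_n = c_{n+1} * (1 + w (n+1))`, this sequence satisfies
`w n = w (n+1) * (1 + w (n+1)) ^ α`, and `w 1 = r` with `r = (1 - c) / c`. The heart of the
proof is the bound `n * w n ≤ M` with `M = max r A` and `A = 2 ^ (1 + 1/α)`, obtained by
induction: if `w (n+1) > M / (n+1)`, then the recursion together with the convexity estimate
`(1 + t) ^ (1/α) ≤ 1 + t * 2 ^ (1/α)` for `t = 1/n` would give `w n > M / n`.

Raising `n * w n ≤ M` to the power `1/α + 1` and using `M ^ p ≤ r ^ p + A ^ p` gives the claim,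
because `n ^ (1/α + 1) * κ * c_n ^ (α+1) = κ ^ (-1/α) * (n * w n) ^ (1/α + 1)` and
`κ ^ (-1/α) = c * r ^ (-1/α)`.
-/

open Real

/-- By convexity, the graph of `x ^ p` on `[1, 2]` lies below its chord, whose slope
is `2 ^ p - 1 ≤ 2 ^ p`. -/
lemma one_add_rpow_le_chord {p t : ℝ} (hp : 1 ≤ p) (ht0 : 0 ≤ t) (ht1 : t ≤ 1) :
    (1 + t) ^ p ≤ 1 + t * 2 ^ p := by
  have h := (convexOn_rpow hp).2 (x := 1) (y := 2) (by simp) (by simp)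
    (sub_nonneg.2 ht1) ht0 (by ring)
  simp only [smul_eq_mul, one_rpow] at h
  have e : (1 - t) * 1 + t * 2 = 1 + t := by ring
  rw [e] at h
  linarith

/-- The induction step of the bound `n * w n ≤ M`, with `v = w n` and `w = w (n + 1)`. -/
lemma succ_mul_le_of_recursion {α M v w : ℝ} (hα0 : 0 < α) (hα1 : α < 1)
    (hM : (2 : ℝ) ^ (1 + 1 / α) ≤ M) (n : ℕ) (hn : 1 ≤ n)
    (hvw : v = w * (1 + w) ^ α) (hv : n * v ≤ M) : ((n + 1 : ℕ) : ℝ) * w ≤ M := by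
  by_contra! hlt
  have hn' : (1 : ℝ) ≤ n := by exact_mod_cast hn
  have hn0 : (0 : ℝ) < n := by linarith
  push_cast at hlt
  have hA : (2 : ℝ) ^ (1 + 1 / α) = 2 * 2 ^ (1 / α) := by
    rw [rpow_add two_pos, rpow_one]
  have h2 : (0 : ℝ) < 2 ^ (1 / α) := by positivity
  have hMpos : 0 < M := by linarith
  have hw : 0 < w := by
    by_contra! h
    nlinarith
  have hchord := one_add_rpow_le_chord (p := 1 / α) (t := 1 / n)
    (by rw [le_div_iff₀ hα0]; linarith) (by positivity) (by rw [div_le_one hn0]; exact hn')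
  -- `2 ^ (1/α) / n ≤ M / (n + 1) < w`, where `n + 1 ≤ 2 * n` absorbs the factor `2` in `A`
  have hw2 : 1 / (n : ℝ) * 2 ^ (1 / α) ≤ w := by
    rw [div_mul_eq_mul_div, one_mul, div_le_iff₀ hn0]
    nlinarith
  have h1 : (1 + 1 / (n : ℝ)) ≤ (1 + w) ^ α := by
    have h := rpow_le_rpow (by positivity) (hchord.trans (by linarith : _ ≤ 1 + w)) hα0.le
    rwa [← rpow_mul (by positivity), one_div_mul_cancel hα0.ne', rpow_one] at h
  have h3 : (n : ℝ) * (w * (1 + 1 / n)) ≤ n * v := by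
    rw [hvw]; gcongr
  have h4 : (n : ℝ) * (w * (1 + 1 / n)) = (n + 1) * w := by
    field_simp
  linarith

/-- For the generalized LSV map with parameters `α ∈ (0,1)`, `c ∈ (0,1)`,
`κ > 0` satisfying `c + κ * c ^ (α + 1) = 1`, the sequence `c_n` defined by `c_0 = 1` and
`g (c_{n+1}) = c_n` with `c_{n+1} ∈ [0, c]`, where `g x = x + κ * x ^ (α + 1)`, satisfies
`c_{n-1} - c_n = κ * c_n ^ (α + 1)` for all `n ≥ 1`, and consequently
`n ^ (1/α + 1) * (c_{n-1} - c_n) ≤ (1 - c) + c * (c/(1-c))^{1/α} * 2^{1 + 2/α + 1/α²}`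
for all `n ≥ 1`. -/
theorem stmt1
    (α c κ : ℝ)
    (hα : α ∈ Set.Ioo (0:ℝ) 1) (hc : c ∈ Set.Ioo (0:ℝ) 1) (hκ : 0 < κ)
    (hparam : c + κ * c ^ (α + 1) = 1)
    (cseq : ℕ → ℝ)
    (hc0 : cseq 0 = 1)
    (hcseq : ∀ n : ℕ, cseq (n + 1) ∈ Set.Icc (0:ℝ) c ∧
      cseq (n + 1) + κ * (cseq (n + 1)) ^ (α + 1) = cseq n) :
    (∀ n : ℕ, 1 ≤ n → cseq (n - 1) - cseq n = κ * (cseq n) ^ (α + 1)) ∧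
    (∀ n : ℕ, 1 ≤ n →
      (n : ℝ) ^ (1 / α + 1) * (cseq (n - 1) - cseq n) ≤
        (1 - c) + c * (c / (1 - c)) ^ (1 / α) * 2 ^ (1 + 2 / α + 1 / α ^ 2)) := by
  obtain ⟨hα0, hα1⟩ := hα
  obtain ⟨hc0', hc1⟩ := hc
  have hfirst : ∀ n : ℕ, 1 ≤ n → cseq (n - 1) - cseq n = κ * (cseq n) ^ (α + 1) := by
    intro n hn
    obtain ⟨m, rfl⟩ := Nat.exists_eq_add_of_le' hn
    have := (hcseq m).2
    simp only [Nat.add_sub_cancel]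
    linarith
  refine ⟨hfirst, fun n hn => ?_⟩
  rw [hfirst n hn]
  set r := (1 - c) / c with hr
  have hr0 : 0 < r := div_pos (by linarith) hc0'
  have hκr : κ * c ^ α = r := by
    rw [rpow_add hc0', rpow_one] at hparam
    rw [hr, eq_div_iff hc0'.ne']
    linarith
  have hnn : ∀ m : ℕ, 1 ≤ m → 0 ≤ cseq m := by
    intro m hm
    obtain ⟨k, rfl⟩ := Nat.exists_eq_add_of_le' hm
    exact (hcseq k).1.1
  have hpow : ∀ x : ℝ, 0 ≤ x → x ^ (α + 1) = x * x ^ α := by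
    intro x hx
    rw [rpow_add_one' hx (by linarith), mul_comm]
  set A : ℝ := 2 ^ (1 + 1 / α) with hA
  have hA0 : 0 < A := by positivity
  have hbound : ∀ m : ℕ, 1 ≤ m → (m : ℝ) * (κ * cseq m ^ α) ≤ max r A := by
    intro m hm
    induction m, hm using Nat.le_induction with
    | base =>
      have h1 : cseq 1 ≤ c := (hcseq 0).1.2
      have h2 : κ * cseq 1 ^ α ≤ κ * c ^ α := by
        have := rpow_le_rpow (hnn 1 le_rfl) h1 hα0.le
        gcongr
      rw [hκr] at h2
      simpa using Or.inl h2
    | succ m hm ih =>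
      have hx := hnn (m + 1) (by omega)
      refine succ_mul_le_of_recursion hα0 hα1 (le_max_right _ _) m hm ?_ ih
      have h : cseq m = cseq (m + 1) * (1 + κ * cseq (m + 1) ^ α) := by
        rw [← (hcseq m).2, hpow _ hx]; ring
      rw [h, mul_rpow hx (by positivity)]
      ring
  have hx := hnn n hn
  have hp0 : 0 < 1 / α + 1 := by positivity
  have hraise : ((n : ℝ) * (κ * cseq n ^ α)) ^ (1 / α + 1)
      ≤ r ^ (1 / α + 1) + A ^ (1 / α + 1) := by
    refine (rpow_le_rpow (by positivity) (hbound n hn) hp0.le).trans ?_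
    rcases max_choice r A with h | h <;> rw [h]
    · exact le_add_of_nonneg_right (by positivity)
    · exact le_add_of_nonneg_left (by positivity)
  have hexp : ((n : ℝ) * (κ * cseq n ^ α)) ^ (1 / α + 1)
      = κ ^ (1 / α) * ((n : ℝ) ^ (1 / α + 1) * (κ * cseq n ^ (α + 1))) := by
    rw [mul_rpow (by positivity) (by positivity), mul_rpow hκ.le (by positivity),
      ← rpow_mul hx, rpow_add_one hκ.ne']
    have : α * (1 / α + 1) = α + 1 := by field_simp; ring
    rw [this]
    ring
  have hκp : κ ^ (1 / α) * c = r ^ (1 / α) := by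
    rw [← hκr, mul_rpow hκ.le (by positivity), ← rpow_mul hc0'.le,
      mul_one_div_cancel hα0.ne', rpow_one]
  have hAp : A ^ (1 / α + 1) = 2 ^ (1 + 2 / α + 1 / α ^ 2) := by
    rw [hA, ← rpow_mul two_pos.le]
    congr 1
    field_simp
    ring
  have hinv : (c / (1 - c)) ^ (1 / α) = (r ^ (1 / α))⁻¹ := by
    rw [← inv_rpow hr0.le, hr, inv_div]
  have hκp0 : 0 < κ ^ (1 / α) := by positivity
  refine le_of_mul_le_mul_left ?_ hκp0
  rw [← hexp]
  refine hraise.trans_eq ?_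
  have hcr : 1 - c = c * r := by rw [hr]; field_simp
  have hrp : 0 < r ^ (1 / α) := by positivity
  rw [hinv, ← hAp, hcr, rpow_add_one hr0.ne']
  calc r ^ (1 / α) * r + A ^ (1 / α + 1)
      = r ^ (1 / α) * r + r ^ (1 / α) * (r ^ (1 / α))⁻¹ * A ^ (1 / α + 1) := by
        rw [mul_inv_cancel₀ hrp.ne', one_mul]
    _ = κ ^ (1 / α) * c * r + κ ^ (1 / α) * c * (r ^ (1 / α))⁻¹ * A ^ (1 / α + 1) := by
        rw [hκp]
    _ = _ := by ring
end

section
/- For every n ≥ 0, all x, y ∈ ℕ, and every open interval (a,b) ⊂ ℝ, one has μ_n((a,b) ∩ I_{(x,y)}) · λ(I_{(x,y)}) = λ((a,b) ∩ I_{(x,y)}) · μ_n(I_{(x,y)}), where λ is Lebesgue measure. In particular, whenever μ_n(I_{(x,y)}) > 0, the conditional distribution of the time-n state 𝒰_ω^n(u_0) given that it lies in I_{(x,y)} (with u_0 uniform on [0,1)) is the uniform distribution on I_{(x,y)}. -/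
/-!
The point is that every `μ_n` belongs to the class of countable combinations
`∑ c_{x,y} • λ|I_{(x,y)}` of Lebesgue measure restricted to the intervals `I_{(x,y)}`
(`CellUniform`). Such a measure restricts to `c_{x,y} • λ` on `I_{(x,y)}`, because these intervals
are pairwise disjoint, and both claims follow from this.

The class contains the uniform law on `[0,1)`, since the `I_{(x,y)}`, `y ∈ ℕ`, partition
`(x, x+1)` (`cellUniform_Ico`). It is preserved by the global map (`CellUniform.map`):
on `I_{(x,y+1)}` the map is affine and onto `I_{(x,y)}`, and on `I_{(x,0)}` it is affine and onto
`[x+1,x+2)`; an affine bijection carries Lebesgue measure to a multiple of Lebesgue measure,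
and the class is closed under multiples and countable sums.

Measurability of the global map is only needed almost everywhere for measures of this class, where
it follows from its being affine on each interval.
-/

open MeasureTheory Filter Set

/-- The local map `U_x` determined by a decreasing sequence `w` with `w 0 = 1`:
`U(0) = 0`; `U(u) = w n + ((w (n-1) - w n)/(w n - w (n+1))) * (u - w (n+1))` for
`u ∈ [w (n+1), w n)`, `n ≥ 1`; and `U(u) = 1 + (u - w 1)/(1 - w 1)` for `u ∈ [w 1, 1)`. -/
noncomputable def Uloc (w : ℕ → ℝ) (u : ℝ) : ℝ :=
  if u = 0 then 0
  else if w 1 ≤ u then 1 + (u - w 1) / (1 - w 1)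
  else
    let n := sInf {k : ℕ | w (k + 1) ≤ u}
    w n + ((w (n - 1) - w n) / (w n - w (n + 1))) * (u - w (n + 1))

/-- The global map `𝒰_ω(u) = ⌊u⌋ + U_{⌊u⌋}(u - ⌊u⌋)`. -/
noncomputable def globMap (ω : ℕ → ℕ → ℝ) (u : ℝ) : ℝ :=
  (⌊u⌋ : ℝ) + Uloc (ω ⌊u⌋.toNat) (u - (⌊u⌋ : ℝ))

/-- The interval `I_{(x,y)} = [x + ω^x_{y+1}, x + ω^x_y)`. -/
def Ixy (ω : ℕ → ℕ → ℝ) (x y : ℕ) : Set ℝ :=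
  Set.Ico ((x : ℝ) + ω x (y + 1)) ((x : ℝ) + ω x y)

/-- Measures that are, on each interval `I_{(x,y)}`, a multiple of Lebesgue measure, and vanish
off the union of these intervals. -/
def CellUniform (ω : ℕ → ℕ → ℝ) (ν : Measure ℝ) : Prop :=
  ∃ c : ℕ × ℕ → ENNReal, ν = Measure.sum fun p => c p • volume.restrict (Ixy ω p.1 p.2)

lemma CellUniform.sum {ω : ℕ → ℕ → ℝ} {ι : Type*} {ν : ι → Measure ℝ}
    (h : ∀ i, CellUniform ω (ν i)) : CellUniform ω (Measure.sum ν) := by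
  choose c hc using h
  refine ⟨fun p => ∑' i, c i p, ?_⟩
  ext s hs
  rw [Measure.sum_apply _ hs, Measure.sum_apply _ hs]
  simp_rw [hc, Measure.sum_apply _ hs, Measure.smul_apply, smul_eq_mul]
  rw [ENNReal.tsum_comm]
  simp_rw [ENNReal.tsum_mul_right]

lemma CellUniform.smul {ω : ℕ → ℕ → ℝ} {ν : Measure ℝ} (h : CellUniform ω ν) (k : ENNReal) :
    CellUniform ω (k • ν) := by
  obtain ⟨c, rfl⟩ := h
  refine ⟨fun p => k * c p, ?_⟩
  ext s hs
  simp only [Measure.smul_apply, Measure.sum_apply _ hs, smul_eq_mul, mul_assoc,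
    ENNReal.tsum_mul_left]

lemma cellUniform_cell (ω : ℕ → ℕ → ℝ) (x y : ℕ) :
    CellUniform ω (volume.restrict (Ixy ω x y)) := by
  refine ⟨fun p => if p = (x, y) then 1 else 0, ?_⟩
  ext s hs
  rw [Measure.sum_apply _ hs, tsum_eq_single (x, y)]
  · simp
  · intro p hp
    simp [hp]

lemma Ixy_subset {ω : ℕ → ℕ → ℝ} (hω0 : ∀ x, ω x 0 = 1) (hωpos : ∀ x n, 0 < ω x n)
    (hωdec : ∀ x n, ω x (n + 1) < ω x n) (x y : ℕ) :
    Ixy ω x y ⊆ Ioo (x : ℝ) (x + 1) := by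
  rintro u ⟨h1, h2⟩
  have h3 := (strictAnti_nat_of_succ_lt (hωdec x)).antitone (Nat.zero_le y)
  have h4 := hωpos x (y + 1)
  have h5 := hω0 x
  exact ⟨by linarith, by linarith⟩

lemma floor_of_mem_Ixy {ω : ℕ → ℕ → ℝ} (hω0 : ∀ x, ω x 0 = 1) (hωpos : ∀ x n, 0 < ω x n)
    (hωdec : ∀ x n, ω x (n + 1) < ω x n) {x y : ℕ} {u : ℝ} (hu : u ∈ Ixy ω x y) :
    ⌊u⌋ = (x : ℤ) := by
  have h := Ixy_subset hω0 hωpos hωdec x y hu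
  rw [Int.floor_eq_iff]
  exact ⟨by simpa using h.1.le, by simpa using h.2⟩

lemma Ixy_disjoint {ω : ℕ → ℕ → ℝ} (hω0 : ∀ x, ω x 0 = 1) (hωpos : ∀ x n, 0 < ω x n)
    (hωdec : ∀ x n, ω x (n + 1) < ω x n) {p q : ℕ × ℕ} (hpq : p ≠ q) :
    Disjoint (Ixy ω p.1 p.2) (Ixy ω q.1 q.2) := by
  obtain ⟨x, y⟩ := p
  obtain ⟨x', y'⟩ := q
  rw [Set.disjoint_left]
  intro u h h'
  have hx : x = x' := by
    have h1 := floor_of_mem_Ixy hω0 hωpos hωdec h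
    have h2 := floor_of_mem_Ixy hω0 hωpos hωdec h'
    exact_mod_cast h1.symm.trans h2
  subst hx
  have hanti := (strictAnti_nat_of_succ_lt (hωdec x)).antitone
  obtain ⟨h1, h2⟩ := h
  obtain ⟨h3, h4⟩ := h'
  rcases lt_trichotomy y y' with hy | hy | hy
  · have := hanti (Nat.succ_le_of_lt hy)
    simp only [Nat.succ_eq_add_one] at this
    linarith
  · exact hpq (by rw [hy])
  · have := hanti (Nat.succ_le_of_lt hy)
    simp only [Nat.succ_eq_add_one] at this
    linarith

lemma iUnion_Ixy {ω : ℕ → ℕ → ℝ} (hω0 : ∀ x, ω x 0 = 1) (hωpos : ∀ x n, 0 < ω x n)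
    (hωdec : ∀ x n, ω x (n + 1) < ω x n)
    (hωlim : ∀ x, Tendsto (fun n => ω x n) atTop (nhds 0)) (x : ℕ) :
    ⋃ y, Ixy ω x y = Ioo (x : ℝ) (x + 1) := by
  refine Subset.antisymm (iUnion_subset (Ixy_subset hω0 hωpos hωdec x)) ?_
  rintro u ⟨h1, h2⟩
  have hex : ∃ n, ω x (n + 1) ≤ u - x := by
    obtain ⟨n, hn⟩ := ((hωlim x).eventually (gt_mem_nhds (sub_pos.2 h1))).exists
    exact ⟨n, ((hωdec x n).trans hn).le⟩
  classical
  refine mem_iUnion.2 ⟨Nat.find hex, ?_, ?_⟩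
  · linarith [Nat.find_spec hex]
  · rcases hm : Nat.find hex with _ | m
    · rw [hω0]
      exact h2
    · have := Nat.find_min hex (m := m) (by omega)
      push Not at this
      linarith

lemma cellUniform_Ico {ω : ℕ → ℕ → ℝ} (hω0 : ∀ x, ω x 0 = 1) (hωpos : ∀ x n, 0 < ω x n)
    (hωdec : ∀ x n, ω x (n + 1) < ω x n)
    (hωlim : ∀ x, Tendsto (fun n => ω x n) atTop (nhds 0)) (x : ℕ) :
    CellUniform ω (volume.restrict (Ico (x : ℝ) (x + 1))) := by
  rw [← Measure.restrict_congr_set (Ioo_ae_eq_Ico (μ := volume) (a := (x : ℝ)) (b := x + 1)),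
    ← iUnion_Ixy hω0 hωpos hωdec hωlim x, Measure.restrict_iUnion]
  · exact CellUniform.sum fun y => cellUniform_cell ω x y
  · intro y y' hy
    exact Ixy_disjoint hω0 hωpos hωdec (p := (x, y)) (q := (x, y')) (by simpa using hy)
  · exact fun y => measurableSet_Ico

lemma CellUniform.restrict_cell {ω : ℕ → ℕ → ℝ} (hω0 : ∀ x, ω x 0 = 1)
    (hωpos : ∀ x n, 0 < ω x n) (hωdec : ∀ x n, ω x (n + 1) < ω x n) {ν : Measure ℝ}
    (h : CellUniform ω ν) (x y : ℕ) :
    ∃ c : ENNReal, ν.restrict (Ixy ω x y) = c • volume.restrict (Ixy ω x y) := by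
  obtain ⟨c, rfl⟩ := h
  refine ⟨c (x, y), ?_⟩
  ext s hs
  have hI : MeasurableSet (Ixy ω x y) := measurableSet_Ico
  rw [Measure.restrict_apply hs, Measure.sum_apply _ (hs.inter hI), tsum_eq_single (x, y)]
  · rw [Measure.smul_apply, Measure.smul_apply, Measure.restrict_apply (hs.inter hI),
      Measure.restrict_apply hs, inter_assoc, inter_self]
  · intro p hp
    have h0 : s ∩ Ixy ω x y ∩ Ixy ω p.1 p.2 = ∅ := by
      rw [inter_assoc, (Ixy_disjoint hω0 hωpos hωdec hp).symm.inter_eq, inter_empty]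
    rw [Measure.smul_apply, Measure.restrict_apply (hs.inter hI), h0, measure_empty, smul_zero]

/-- An increasing affine bijection `[a,b) → [c,d)` carries Lebesgue measure on `[a,b)` to a multiple
of Lebesgue measure on `[c,d)`. -/
lemma map_affine_Ico {a b c d : ℝ} (hab : a < b) (hcd : c < d) :
    ∃ k : ENNReal, Measure.map (fun u => c + (d - c) / (b - a) * (u - a))
      (volume.restrict (Ico a b)) = k • volume.restrict (Ico c d) := by
  set r := (d - c) / (b - a) with hr
  have hba : 0 < b - a := sub_pos.2 hab
  have hr0 : 0 < r := div_pos (sub_pos.2 hcd) hba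
  have hrb : r * (b - a) = d - c := by
    rw [hr]
    field_simp
  have hpre : (fun u => c + r * (u - a)) ⁻¹' Ico c d = Ico a b := by
    ext u
    simp only [mem_preimage, mem_Ico]
    constructor
    · rintro ⟨h1, h2⟩
      constructor
      · by_contra! h
        nlinarith
      · by_contra! h
        nlinarith
    · rintro ⟨h1, h2⟩
      constructor <;> nlinarith
  have hcomp : (fun u => c + r * (u - a)) = (fun v => v + (c - r * a)) ∘ (fun u => r * u) := by
    funext u
    simp only [Function.comp]
    ring
  have hmeas : Measurable fun u => c + r * (u - a) := by fun_prop
  refine ⟨ENNReal.ofReal |r⁻¹|, ?_⟩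
  rw [← hpre, ← Measure.restrict_map hmeas measurableSet_Ico, hcomp,
    ← Measure.map_map (by fun_prop) (by fun_prop), Real.map_volume_mul_left hr0.ne',
    Measure.map_smul, map_add_right_eq_self, Measure.restrict_smul]

lemma globMap_cell_zero {ω : ℕ → ℕ → ℝ} (hω0 : ∀ x, ω x 0 = 1) (hωpos : ∀ x n, 0 < ω x n)
    (hωdec : ∀ x n, ω x (n + 1) < ω x n) {x : ℕ} {u : ℝ} (hu : u ∈ Ixy ω x 0) :
    globMap ω u = ((x + 1 : ℕ) : ℝ) + (((x + 1 : ℕ) : ℝ) + 1 - ((x + 1 : ℕ) : ℝ)) /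
      ((x + ω x 0) - (x + ω x (0 + 1))) * (u - (x + ω x (0 + 1))) := by
  have hx := Ixy_subset hω0 hωpos hωdec x 0 hu
  have h1 : ω x 1 ≤ u - x := by
    have := hu.1
    simp only [zero_add] at this
    linarith
  have h0 : u - (x : ℝ) ≠ 0 := (sub_pos.2 hx.1).ne'
  rw [globMap, floor_of_mem_Ixy hω0 hωpos hωdec hu, Int.toNat_natCast, Int.cast_natCast, Uloc,
    if_neg h0, if_pos h1, hω0, zero_add]
  push_cast
  rw [add_sub_add_left_eq_sub, add_sub_cancel_left]
  ring

lemma globMap_cell_succ {ω : ℕ → ℕ → ℝ} (hω0 : ∀ x, ω x 0 = 1) (hωpos : ∀ x n, 0 < ω x n)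
    (hωdec : ∀ x n, ω x (n + 1) < ω x n) {x y : ℕ} {u : ℝ} (hu : u ∈ Ixy ω x (y + 1)) :
    globMap ω u = (x + ω x (y + 1)) + ((x + ω x y) - (x + ω x (y + 1))) /
      ((x + ω x (y + 1)) - (x + ω x (y + 1 + 1))) * (u - (x + ω x (y + 1 + 1))) := by
  have hx := Ixy_subset hω0 hωpos hωdec x (y + 1) hu
  have hanti := (strictAnti_nat_of_succ_lt (hωdec x)).antitone
  have hn : sInf {k : ℕ | ω x (k + 1) ≤ u - x} = y + 1 := by
    refine IsLeast.csInf_eq ⟨?_, ?_⟩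
    · have := hu.1
      simp only [mem_ofPred_eq]
      linarith
    · intro k hk
      by_contra! hlt
      have h1 : ω x (y + 1) ≤ ω x (k + 1) := hanti (by omega)
      have h2 := hu.2
      simp only [mem_ofPred_eq] at hk
      linarith
  have h1 : ¬ ω x 1 ≤ u - x := by
    have h2 : ω x (y + 1) ≤ ω x 1 := hanti (by omega)
    have h3 := hu.2
    intro h
    linarith
  have h0 : u - (x : ℝ) ≠ 0 := (sub_pos.2 hx.1).ne'
  rw [globMap, floor_of_mem_Ixy hω0 hωpos hωdec hu, Int.toNat_natCast, Int.cast_natCast, Uloc,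
    if_neg h0, if_neg h1, hn]
  simp only [Nat.add_sub_cancel]
  rw [add_sub_add_left_eq_sub, add_sub_add_left_eq_sub]
  ring

/-- Holds because on each `I_{(x,y)}` the global map agrees with an affine map whose image is either
`I_{(x,y-1)}` or `[x+1,x+2)`. -/
lemma globMap_cell {ω : ℕ → ℕ → ℝ} (hω0 : ∀ x, ω x 0 = 1) (hωpos : ∀ x n, 0 < ω x n)
    (hωdec : ∀ x n, ω x (n + 1) < ω x n)
    (hωlim : ∀ x, Tendsto (fun n => ω x n) atTop (nhds 0)) (x y : ℕ) :
    AEMeasurable (globMap ω) (volume.restrict (Ixy ω x y)) ∧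
      CellUniform ω (Measure.map (globMap ω) (volume.restrict (Ixy ω x y))) := by
  have key : ∀ {c d : ℝ}, c < d → CellUniform ω (volume.restrict (Ico c d)) →
      (∀ u ∈ Ixy ω x y, globMap ω u = c + (d - c) / ((x + ω x y) - (x + ω x (y + 1))) *
        (u - (x + ω x (y + 1)))) →
      AEMeasurable (globMap ω) (volume.restrict (Ixy ω x y)) ∧
        CellUniform ω (Measure.map (globMap ω) (volume.restrict (Ixy ω x y))) := by
    intro c d hcd hU heq
    have hae := ae_restrict_of_forall_mem (μ := volume)
      (measurableSet_Ico : MeasurableSet (Ixy ω x y)) heq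
    refine ⟨AEMeasurable.congr (by fun_prop) (EventuallyEq.symm hae), ?_⟩
    obtain ⟨k, hk⟩ := map_affine_Ico (add_lt_add_right (hωdec x y) (x : ℝ)) hcd
    rw [Ixy, Measure.map_congr hae, hk]
    exact hU.smul k
  rcases y with _ | y
  · exact key (lt_add_one _) (cellUniform_Ico hω0 hωpos hωdec hωlim (x + 1))
      fun u hu => globMap_cell_zero hω0 hωpos hωdec hu
  · exact key (add_lt_add_right (hωdec x y) (x : ℝ)) (cellUniform_cell ω x y)
      fun u hu => globMap_cell_succ hω0 hωpos hωdec hu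

lemma CellUniform.map {ω : ℕ → ℕ → ℝ} (hω0 : ∀ x, ω x 0 = 1) (hωpos : ∀ x n, 0 < ω x n)
    (hωdec : ∀ x n, ω x (n + 1) < ω x n)
    (hωlim : ∀ x, Tendsto (fun n => ω x n) atTop (nhds 0)) {ν : Measure ℝ}
    (h : CellUniform ω ν) :
    AEMeasurable (globMap ω) ν ∧ CellUniform ω (Measure.map (globMap ω) ν) := by
  obtain ⟨c, rfl⟩ := h
  have hcell := fun p : ℕ × ℕ => globMap_cell hω0 hωpos hωdec hωlim p.1 p.2
  have hm : AEMeasurable (globMap ω)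
      (Measure.sum fun p : ℕ × ℕ => c p • volume.restrict (Ixy ω p.1 p.2)) :=
    aemeasurable_sum_measure_iff.2 fun p => (hcell p).1.smul_measure (c p)
  refine ⟨hm, ?_⟩
  rw [Measure.map_sum hm]
  refine CellUniform.sum fun p => ?_
  rw [Measure.map_smul]
  exact (hcell p).2.smul (c p)

lemma cellUniform_iterate {ω : ℕ → ℕ → ℝ} (hω0 : ∀ x, ω x 0 = 1) (hωpos : ∀ x n, 0 < ω x n)
    (hωdec : ∀ x n, ω x (n + 1) < ω x n)
    (hωlim : ∀ x, Tendsto (fun n => ω x n) atTop (nhds 0)) (n : ℕ) :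
    AEMeasurable (globMap ω)^[n] (volume.restrict (Ico (0 : ℝ) 1)) ∧
      CellUniform ω (Measure.map (globMap ω)^[n] (volume.restrict (Ico (0 : ℝ) 1))) := by
  induction n with
  | zero =>
    refine ⟨aemeasurable_id, ?_⟩
    rw [Function.iterate_zero, Measure.map_id]
    simpa using cellUniform_Ico hω0 hωpos hωdec hωlim 0
  | succ n ih =>
    obtain ⟨hm, hU⟩ := ih
    obtain ⟨hm', hU'⟩ := hU.map hω0 hωpos hωdec hωlim
    rw [Function.iterate_succ']
    refine ⟨hm'.comp_aemeasurable hm, ?_⟩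
    rwa [← AEMeasurable.map_map_of_aemeasurable hm' hm]

/-- with `u₀` uniform on `[0,1)` and `μ_n` the law of `𝒰_ω^n(u₀)`, for every
`n`, `x`, `y` and every open interval `(a,b)` we have
`μ_n((a,b) ∩ I_{(x,y)}) ⬝ λ(I_{(x,y)}) = λ((a,b) ∩ I_{(x,y)}) ⬝ μ_n(I_{(x,y)})`; in
particular, whenever `μ_n(I_{(x,y)}) > 0`, the conditional distribution of `𝒰_ω^n(u₀)`
given `{𝒰_ω^n(u₀) ∈ I_{(x,y)}}` is the uniform distribution on `I_{(x,y)}`. -/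
theorem stmt2
    (ω : ℕ → ℕ → ℝ)
    (hω0 : ∀ x, ω x 0 = 1)
    (hωpos : ∀ x n, 0 < ω x n)
    (hωdec : ∀ x n, ω x (n + 1) < ω x n)
    (hωlim : ∀ x, Tendsto (fun n => ω x n) atTop (nhds 0))
    (μn : ℕ → Measure ℝ)
    (hμn : ∀ n, μn n = Measure.map (globMap ω)^[n] (volume.restrict (Set.Ico (0:ℝ) 1))) :
    (∀ (n x y : ℕ) (a b : ℝ),
      μn n (Set.Ioo a b ∩ Ixy ω x y) * volume (Ixy ω x y)
        = volume (Set.Ioo a b ∩ Ixy ω x y) * μn n (Ixy ω x y)) ∧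
    (∀ (n x y : ℕ), 0 < μn n (Ixy ω x y) →
      ProbabilityTheory.cond (μn n) (Ixy ω x y) = (volume (Ixy ω x y))⁻¹ • volume.restrict (Ixy ω x y)) := by
  have hcell : ∀ n x y, ∃ c : ENNReal,
      (μn n).restrict (Ixy ω x y) = c • volume.restrict (Ixy ω x y) := fun n x y => by
    rw [hμn]
    exact (cellUniform_iterate hω0 hωpos hωdec hωlim n).2.restrict_cell hω0 hωpos hωdec x y
  have hself : ∀ {n x y c}, (μn n).restrict (Ixy ω x y) = c • volume.restrict (Ixy ω x y) →
      μn n (Ixy ω x y) = c * volume (Ixy ω x y) := fun {n x y c} hc => by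
    have := congrArg (fun m : Measure ℝ => m (Ixy ω x y)) hc
    simpa using this
  refine ⟨fun n x y a b => ?_, fun n x y hpos => ?_⟩
  · obtain ⟨c, hc⟩ := hcell n x y
    have h1 : μn n (Ioo a b ∩ Ixy ω x y) = c * volume (Ioo a b ∩ Ixy ω x y) := by
      rw [← Measure.restrict_apply measurableSet_Ioo, hc, Measure.smul_apply,
        Measure.restrict_apply measurableSet_Ioo, smul_eq_mul]
    rw [h1, hself hc]
    ring
  · obtain ⟨c, hc⟩ := hcell n x y
    have hI := hself hc
    have hfin : μn n (Ixy ω x y) ≠ ⊤ := by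
      rw [hμn]
      exact measure_ne_top _ _
    have hvol : volume (Ixy ω x y) ≠ 0 := by
      rw [Ixy, Real.volume_Ico]
      simpa using hωdec x y
    have hc0 : c ≠ 0 := by
      rintro rfl
      simp [hI] at hpos
    have hctop : c ≠ ⊤ := by
      rintro rfl
      exact hfin (by rw [hI, ENNReal.top_mul hvol])
    rw [ProbabilityTheory.cond, hc, smul_smul, hI, ENNReal.mul_inv (Or.inl hc0) (Or.inl hctop),
      mul_right_comm, ENNReal.inv_mul_cancel hc0 hctop, one_mul]
end

section
/- Let (ξ_n)_{n ≥ 0} be a stationary sequence of real-valued random variables with α-mixing coefficients α(k). Suppose 𝔼|ξ_0|^{r+δ} < ∞ for some r > 2 and δ > 0, and that α(n) = O(n^{−θ}) with θ > r(r+δ)/(2δ). Then for every u > 0 and every p > 1/r + 1/4, almost surely max_{1 ≤ j ≤ u·(k log k)^{1/2}} |∑_{ℓ=k+1}^{k+j} (ξ_ℓ − 𝔼[ξ_0])| = o(k^p) as k → ∞. -/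
/-!
Write `X_i = ξ_i - 𝔼 ξ_0` and `v = r + δ`. Since the windows `(k, k + j]` have length about `k^{1/2}`,
it suffices to control maxima of sums over the blocks of length `N = m^{1+ρ}` that start at the
squares `m^2`, so Borel–Cantelli only needs that the maximum over `N` steps exceeds `N^b` with
probability `O(N^{-c})` for some `c > 1`, where `1/2 + 2/r < b < 2p`
(`ae_eventually_le_of_tailBound`).

A covariance inequality of Davydov type (`abs_integral_mul_le_of_mixing`) yields summable
covariances, hence variances growing linearly, and a dyadic maximal inequality
(`measureReal_exceed_two_pow_le`) turns this into the tail bound with `c = 4/r`. This settles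
`r < 4`.

For `r ≥ 4` the exponent is improved by a Hoffmann-Jørgensen inequality for mixing sequences
(`measureReal_exceed_four_mul_le`): to exceed `4x` the sums must first exceed `x` and then, after a
gap of length `q`, make another excursion of size `2x`, unless they move by more than `x` within
`2q` steps. Mixing decouples the two excursions, so the probability is squared and the exponent `c`
doubles (`TailBound.double`). The errors are `(N/q) α(q)` and `N/q` times a crude moment bound for
blocks of length `2q`; with `q = N^{4/(r+2)}` both are `O(N^{-c'})` with `c' > 1`, because `θ > r/2`,
`v > r` and `(r - 2)(r - 4) ≥ 0`. Finitely many doublings give `c > 1`.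
-/

open MeasureTheory ProbabilityTheory Filter

/-- The σ-algebra `σ(ξ_j : 0 ≤ j ≤ ℓ)` generated by the first `ℓ + 1` variables. -/
def sigmaUpTo {Ωp : Type*} (ξ : ℕ → Ωp → ℝ) (ℓ : ℕ) : MeasurableSpace Ωp :=
  ⨆ j ∈ Set.Iic ℓ, MeasurableSpace.comap (ξ j) inferInstance

/-- The σ-algebra `σ(ξ_j : j ≥ i)` generated by the variables from time `i` on. -/
def sigmaFrom {Ωp : Type*} (ξ : ℕ → Ωp → ℝ) (i : ℕ) : MeasurableSpace Ωp :=
  ⨆ j ∈ Set.Ici i, MeasurableSpace.comap (ξ j) inferInstance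

/-! ### Covariance inequalities under mixing -/

/-- Layer-cake argument: closeness of two measures on the events of `m` passes to integrals of
`m`-measurable functions with values in `[0, 1]`. -/
lemma abs_integral_sub_le_of_abs_measureReal_sub_le {Ω : Type*} {m m0 : MeasurableSpace Ω}
    (hm : m ≤ m0) (μ ν : Measure[m0] Ω) [IsFiniteMeasure μ] [IsFiniteMeasure ν] {α : ℝ}
    (h : ∀ A, MeasurableSet[m] A → |μ.real A - ν.real A| ≤ α)
    {f : Ω → ℝ} (hf : Measurable[m] f) (h0 : ∀ a, 0 ≤ f a) (h1 : ∀ a, f a ≤ 1) :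
    |∫ a, f a ∂μ - ∫ a, f a ∂ν| ≤ α := by
  have hf0 : Measurable[m0] f := hf.mono hm le_rfl
  have hint : ∀ (κ : Measure[m0] Ω) [IsFiniteMeasure κ], Integrable f κ := fun κ _ =>
    Integrable.of_bound hf0.aestronglyMeasurable 1
      (Eventually.of_forall fun a => by rw [Real.norm_of_nonneg (h0 a)]; exact h1 a)
  have hlc : ∀ (κ : Measure[m0] Ω) [IsFiniteMeasure κ],
      ∫ a, f a ∂κ = ∫ t in Set.Ioc 0 1, κ.real {a | t ≤ f a} := fun κ _ =>
    (hint κ).integral_eq_integral_Ioc_meas_le (Eventually.of_forall h0) (Eventually.of_forall h1)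
  have hti : ∀ (κ : Measure[m0] Ω) [IsFiniteMeasure κ],
      IntegrableOn (fun t : ℝ => κ.real {a | t ≤ f a}) (Set.Ioc 0 1) := fun κ _ => by
    have hanti : Antitone (fun t : ℝ => κ.real {a | t ≤ f a}) := fun t t' htt =>
      measureReal_mono fun a (ha : t' ≤ f a) => htt.trans ha
    refine Integrable.of_bound hanti.measurable.aestronglyMeasurable (κ.real Set.univ)
      (Eventually.of_forall fun t => ?_)
    rw [Real.norm_of_nonneg measureReal_nonneg]
    exact measureReal_mono (Set.subset_univ _)
  rw [hlc μ, hlc ν, ← integral_sub (hti μ) (hti ν)]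
  have := norm_setIntegral_le_of_norm_le_const (μ := (volume : Measure ℝ)) (s := Set.Ioc 0 1)
    (f := fun t : ℝ => μ.real {a | t ≤ f a} - ν.real {a | t ≤ f a}) (C := α) (by simp)
    (fun t _ => h _ (hf measurableSet_Ici))
  simpa using this

/-- The mixing bound on events extends to functions with values in `[0, 1]`: replace first one
indicator, then the other, the second time with `f` as a density. -/
lemma abs_cov_le_of_unit {Ω : Type*} {m₁ m₂ m0 : MeasurableSpace Ω} (h₁ : m₁ ≤ m0) (h₂ : m₂ ≤ m0)
    (P : Measure[m0] Ω) [IsProbabilityMeasure P] {α : ℝ}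
    (h : ∀ A B, MeasurableSet[m₁] A → MeasurableSet[m₂] B →
      |P.real (A ∩ B) - P.real A * P.real B| ≤ α)
    {f g : Ω → ℝ} (hf : Measurable[m₁] f) (hf0 : ∀ a, 0 ≤ f a) (hf1 : ∀ a, f a ≤ 1)
    (hg : Measurable[m₂] g) (hg0 : ∀ a, 0 ≤ g a) (hg1 : ∀ a, g a ≤ 1) :
    |∫ a, f a * g a ∂P - (∫ a, f a ∂P) * ∫ a, g a ∂P| ≤ α := by
  have hfm : Measurable[m0] f := hf.mono h₁ le_rfl
  have hfi : Integrable f P := Integrable.of_bound hfm.aestronglyMeasurable 1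
      (Eventually.of_forall fun a => by rw [Real.norm_of_nonneg (hf0 a)]; exact hf1 a)
  -- the covariance of `f` with the indicator of an event of `m₂`
  have step : ∀ B, MeasurableSet[m₂] B →
      |∫ a in B, f a ∂P - (∫ a, f a ∂P) * P.real B| ≤ α := fun B hB => by
    have := abs_integral_sub_le_of_abs_measureReal_sub_le h₁ (P.restrict B)
      ((P.real B).toNNReal • P) (α := α) (fun A hA => by
        have := h A B hA hB
        simpa [measureReal_restrict_apply (h₁ A hA), mul_comm (P.real A)] using this) hf hf0 hf1
    rw [integral_smul_nnreal_measure] at this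
    rw [mul_comm (∫ a, f a ∂P)]
    simpa [NNReal.smul_def] using this
  have hF : 0 ≤ ∫ a, f a ∂P := integral_nonneg fun a => hf0 a
  have hfP : IsFiniteMeasure (P.withDensity fun a => ((f a).toNNReal : ENNReal)) := by
    refine isFiniteMeasure_withDensity ?_
    exact hfi.lintegral_lt_top.ne
  have := abs_integral_sub_le_of_abs_measureReal_sub_le h₂
    (P.withDensity fun a => ((f a).toNNReal : ENNReal))
    ((∫ a, f a ∂P).toNNReal • P) (α := α) (fun B hB => by
      have := step B hB
      have e : (P.withDensity fun a => ((f a).toNNReal : ENNReal)).real B = ∫ a in B, f a ∂P := by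
        rw [Measure.real, withDensity_apply _ (h₂ B hB), integral_eq_lintegral_of_nonneg_ae
          (Eventually.of_forall hf0) hfm.aestronglyMeasurable]
        rfl
      rw [e]
      simpa [hF] using this) hg hg0 hg1
  rw [integral_withDensity_eq_integral_smul hfm.real_toNNReal,
    integral_smul_nnreal_measure] at this
  simpa [NNReal.smul_def, hf0, hF] using this

lemma abs_cov_le_of_bounded {Ω : Type*} {m₁ m₂ m0 : MeasurableSpace Ω} (h₁ : m₁ ≤ m0)
    (h₂ : m₂ ≤ m0) (P : Measure[m0] Ω) [IsProbabilityMeasure P] {α : ℝ}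
    (h : ∀ A B, MeasurableSet[m₁] A → MeasurableSet[m₂] B →
      |P.real (A ∩ B) - P.real A * P.real B| ≤ α)
    {T : ℝ} (hT : 0 < T) {f g : Ω → ℝ} (hf : Measurable[m₁] f) (hfT : ∀ a, |f a| ≤ T)
    (hg : Measurable[m₂] g) (hgT : ∀ a, |g a| ≤ T) :
    |∫ a, f a * g a ∂P - (∫ a, f a ∂P) * ∫ a, g a ∂P| ≤ 4 * T ^ 2 * α := by
  have hfm : Measurable[m0] f := hf.mono h₁ le_rfl
  have hgm : Measurable[m0] g := hg.mono h₂ le_rfl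
  have hfi : Integrable f P := Integrable.of_bound hfm.aestronglyMeasurable T
      (Eventually.of_forall hfT)
  have hgi : Integrable g P := Integrable.of_bound hgm.aestronglyMeasurable T
      (Eventually.of_forall hgT)
  have hfgi : Integrable (fun a => f a * g a) P :=
    Integrable.of_bound (hfm.mul hgm).aestronglyMeasurable (T * T)
      (Eventually.of_forall fun a => by
        rw [norm_mul]; exact mul_le_mul (hfT a) (hgT a) (norm_nonneg _) hT.le)
  have key := abs_cov_le_of_unit h₁ h₂ P h (f := fun a => (f a + T) * (2 * T)⁻¹)
    (g := fun a => (g a + T) * (2 * T)⁻¹)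
    ((hf.add_const T).mul_const _)
    (fun a => mul_nonneg (by linarith [(abs_le.1 (hfT a)).1]) (by positivity))
    (fun a => by
      rw [← div_eq_mul_inv, div_le_one (by positivity)]; linarith [(abs_le.1 (hfT a)).2])
    ((hg.add_const T).mul_const _)
    (fun a => mul_nonneg (by linarith [(abs_le.1 (hgT a)).1]) (by positivity))
    (fun a => by
      rw [← div_eq_mul_inv, div_le_one (by positivity)]; linarith [(abs_le.1 (hgT a)).2])
  have e1 : ∀ k : Ω → ℝ, Integrable k P →
      ∫ a, (k a + T) * (2 * T)⁻¹ ∂P = (∫ a, k a ∂P + T) * (2 * T)⁻¹ := fun k hk => by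
    rw [integral_mul_const, integral_add hk (integrable_const T)]; simp
  have e2 : ∫ a, (f a + T) * (2 * T)⁻¹ * ((g a + T) * (2 * T)⁻¹) ∂P
      = (∫ a, f a * g a ∂P + T * ∫ a, f a ∂P + T * ∫ a, g a ∂P + T * T)
        * ((2 * T)⁻¹ * (2 * T)⁻¹) := by
    have : ∀ a, (f a + T) * (2 * T)⁻¹ * ((g a + T) * (2 * T)⁻¹)
      = (f a * g a + T * f a + T * g a + T * T) * ((2 * T)⁻¹ * (2 * T)⁻¹) := fun a => by ring
    simp_rw [this]
    have i1 : Integrable (fun a => f a * g a + T * f a) P := hfgi.add (hfi.const_mul T)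
    have i2 : Integrable (fun a => f a * g a + T * f a + T * g a) P := i1.add (hgi.const_mul T)
    rw [integral_mul_const, integral_add i2 (integrable_const _),
      integral_add i1 (hgi.const_mul T),
      integral_add hfgi (hfi.const_mul T), integral_const_mul, integral_const_mul]
    simp
  rw [e1 f hfi, e1 g hgi, e2] at key
  have e3 : (∫ a, f a * g a ∂P + T * ∫ a, f a ∂P + T * ∫ a, g a ∂P + T * T)
        * ((2 * T)⁻¹ * (2 * T)⁻¹)
        - (∫ a, f a ∂P + T) * (2 * T)⁻¹ * ((∫ a, g a ∂P + T) * (2 * T)⁻¹)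
      = (∫ a, f a * g a ∂P - (∫ a, f a ∂P) * ∫ a, g a ∂P) * (4 * T ^ 2)⁻¹ := by
    field_simp; ring
  rw [e3, abs_mul, abs_of_pos (a := (4 * T ^ 2)⁻¹) (by positivity), ← div_eq_mul_inv,
    div_le_iff₀ (by positivity)] at key
  linarith

lemma abs_sub_clamp_le {s T x : ℝ} (hs : 2 < s) (hT : 0 < T) :
    |x - max (-T) (min x T)| ≤ T ^ (1 - s) * |x| ^ s := by
  rcases le_or_gt |x| T with h | h
  · have h' := abs_le.1 h
    rw [min_eq_left h'.2, max_eq_right h'.1, sub_self, abs_zero]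
    positivity
  · have h1 : |x - max (-T) (min x T)| ≤ |x| := by
      rcases abs_cases x with ⟨h2, h3⟩ | ⟨h2, h3⟩
      · rw [min_eq_right (by linarith), max_eq_right (by linarith), abs_le]
        constructor <;> linarith
      · rw [min_eq_left (by linarith), max_eq_left (by linarith), abs_le]
        constructor <;> linarith
    have h2 : T ^ (s - 1) ≤ |x| ^ (s - 1) := Real.rpow_le_rpow hT.le h.le (by linarith)
    have h3 : |x| ^ s = |x| ^ (s - 1) * |x| := by
      rw [← Real.rpow_add_one (hT.trans h).ne']
      ring_nf
    have h4 : T ^ (1 - s) * T ^ (s - 1) = 1 := by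
      rw [← Real.rpow_add hT]; simp
    calc _ ≤ |x| := h1
      _ = T ^ (1 - s) * T ^ (s - 1) * |x| := by rw [h4, one_mul]
      _ ≤ T ^ (1 - s) * |x| ^ (s - 1) * |x| := by gcongr
      _ = _ := by rw [h3]; ring

lemma abs_mul_sub_clamp_le {s T x y : ℝ} (hs : 2 < s) (hT : 0 < T) :
    |x * y - max (-T) (min x T) * max (-T) (min y T)| ≤ T ^ (2 - s) * (|x| ^ s + |y| ^ s) := by
  have hz : ∀ z : ℝ, T < z → z ^ 2 ≤ T ^ (2 - s) * z ^ s := fun z hz => by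
    have hz0 : 0 < z := hT.trans hz
    have h2 : T ^ (s - 2) ≤ z ^ (s - 2) := Real.rpow_le_rpow hT.le hz.le (by linarith)
    have h3 : z ^ s = z ^ (s - 2) * z ^ 2 := by
      rw [← Real.rpow_two, ← Real.rpow_add hz0]; ring_nf
    have h4 : T ^ (2 - s) * T ^ (s - 2) = 1 := by
      rw [← Real.rpow_add hT]; simp
    calc _ = T ^ (2 - s) * T ^ (s - 2) * z ^ 2 := by rw [h4, one_mul]
      _ ≤ T ^ (2 - s) * z ^ (s - 2) * z ^ 2 := by gcongr
      _ = _ := by rw [h3]; ring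
  -- clamping multiplies by a factor in `[0, 1]`
  have hc : ∀ w : ℝ, ∃ t, 0 ≤ t ∧ t ≤ 1 ∧ max (-T) (min w T) = t * w := fun w => by
    rcases le_or_gt |w| T with h | h
    · have h' := abs_le.1 h
      exact ⟨1, by norm_num, le_rfl, by rw [min_eq_left h'.2, max_eq_right h'.1, one_mul]⟩
    · have hw : 0 < |w| := hT.trans h
      refine ⟨T / |w|, by positivity, (div_le_one hw).2 h.le, ?_⟩
      rcases abs_cases w with ⟨h2, h3⟩ | ⟨h2, h3⟩
      · rw [min_eq_right (by linarith), max_eq_right (by linarith), h2]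
        have : w ≠ 0 := by rintro rfl; simp at hw
        field_simp
      · rw [min_eq_left (by linarith), max_eq_left (by linarith), h2]
        have : w ≠ 0 := h3.ne
        field_simp
  have hT2 : 0 < T ^ (2 - s) := Real.rpow_pos_of_pos hT _
  have hx := Real.rpow_nonneg (abs_nonneg x) s
  have hy := Real.rpow_nonneg (abs_nonneg y) s
  rcases le_or_gt (max |x| |y|) T with h | h
  · have hx' := abs_le.1 ((le_max_left _ _).trans h)
    have hy' := abs_le.1 ((le_max_right _ _).trans h)
    rw [min_eq_left hx'.2, max_eq_right hx'.1, min_eq_left hy'.2, max_eq_right hy'.1, sub_self,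
      abs_zero]
    positivity
  · obtain ⟨t, t0, t1, ht⟩ := hc x
    obtain ⟨t', t0', t1', ht'⟩ := hc y
    have htt : t * t' ≤ 1 := mul_le_one₀ t1 t0' t1'
    have htt0 : 0 ≤ t * t' := mul_nonneg t0 t0'
    have h1 : |x * y - t * x * (t' * y)| ≤ max |x| |y| ^ 2 := by
      have : x * y - t * x * (t' * y) = (1 - t * t') * (x * y) := by ring
      rw [this, abs_mul, abs_mul, abs_of_nonneg (by linarith : 0 ≤ 1 - t * t'), sq]
      calc _ ≤ 1 * (|x| * |y|) := by gcongr; linarith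
        _ ≤ _ := by
          rw [one_mul]
          exact mul_le_mul (le_max_left _ _) (le_max_right _ _) (abs_nonneg _)
            ((abs_nonneg x).trans (le_max_left _ _))
    rw [ht, ht']
    refine h1.trans ((hz _ h).trans ?_)
    gcongr
    rcases max_cases |x| |y| with ⟨h, _⟩ | ⟨h, _⟩ <;> rw [h] <;> linarith

/-- Davydov type covariance inequality for centred variables with bounded `s`-th moments, in terms
of the free truncation level `T`. -/
lemma abs_integral_mul_le_of_mixing {Ω : Type*} {m₁ m₂ m0 : MeasurableSpace Ω} (h₁ : m₁ ≤ m0)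
    (h₂ : m₂ ≤ m0) (P : Measure[m0] Ω) [IsProbabilityMeasure P] {α : ℝ}
    (h : ∀ A B, MeasurableSet[m₁] A → MeasurableSet[m₂] B →
      |P.real (A ∩ B) - P.real A * P.real B| ≤ α)
    {s T D : ℝ} (hs : 2 < s) (hT : 0 < T) {X Y : Ω → ℝ}
    (hX : Measurable[m₁] X) (hY : Measurable[m₂] Y)
    (hXi : Integrable X P) (hX0 : ∫ a, X a ∂P = 0) (hXYi : Integrable (fun a => X a * Y a) P)
    (hXs : Integrable (fun a => |X a| ^ s) P) (hXD : ∫ a, |X a| ^ s ∂P ≤ D)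
    (hYs : Integrable (fun a => |Y a| ^ s) P) (hYD : ∫ a, |Y a| ^ s ∂P ≤ D) :
    |∫ a, X a * Y a ∂P| ≤ 4 * T ^ 2 * α + 3 * D * T ^ (2 - s) := by
  set f : Ω → ℝ := fun a => max (-T) (min (X a) T) with hfdef
  set g : Ω → ℝ := fun a => max (-T) (min (Y a) T) with hgdef
  have hb : ∀ w : ℝ, |max (-T) (min w T)| ≤ T := fun w =>
    abs_le.2 ⟨le_max_left _ _, max_le (by linarith) (min_le_right _ _)⟩
  have hf : Measurable[m₁] f := measurable_const.max (hX.min measurable_const)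
  have hg : Measurable[m₂] g := measurable_const.max (hY.min measurable_const)
  have hfm : Measurable[m0] f := hf.mono h₁ le_rfl
  have hgm : Measurable[m0] g := hg.mono h₂ le_rfl
  have hfi : Integrable f P := Integrable.of_bound hfm.aestronglyMeasurable T
      (Eventually.of_forall fun a => hb _)
  have hfgi : Integrable (fun a => f a * g a) P :=
    Integrable.of_bound (hfm.mul hgm).aestronglyMeasurable (T * T)
      (Eventually.of_forall fun a => by
        rw [norm_mul]; exact mul_le_mul (hb _) (hb _) (norm_nonneg _) hT.le)
  have c1 := abs_cov_le_of_bounded h₁ h₂ P h hT hf (fun a => hb _) hg (fun a => hb _)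
  have c2 : |∫ a, X a * Y a ∂P - ∫ a, f a * g a ∂P| ≤ T ^ (2 - s) * (D + D) := by
    rw [← integral_sub hXYi hfgi]
    calc |∫ a, (X a * Y a - f a * g a) ∂P| ≤ ∫ a, T ^ (2 - s) * (|X a| ^ s + |Y a| ^ s) ∂P :=
          norm_integral_le_of_norm_le (f := fun a => X a * Y a - f a * g a)
            (g := fun a => T ^ (2 - s) * (|X a| ^ s + |Y a| ^ s)) ((hXs.add hYs).const_mul _)
            (Eventually.of_forall fun a => abs_mul_sub_clamp_le hs hT)
      _ = T ^ (2 - s) * (∫ a, |X a| ^ s ∂P + ∫ a, |Y a| ^ s ∂P) := by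
          rw [integral_const_mul, integral_add hXs hYs]
      _ ≤ _ := by gcongr
  have c3 : |∫ a, f a ∂P| ≤ T ^ (1 - s) * D := by
    have : ∫ a, f a ∂P = - ∫ a, (X a - f a) ∂P := by rw [integral_sub hXi hfi, hX0]; ring
    rw [this, abs_neg]
    calc |∫ a, (X a - f a) ∂P| ≤ ∫ a, T ^ (1 - s) * |X a| ^ s ∂P :=
          norm_integral_le_of_norm_le (f := fun a => X a - f a)
            (g := fun a => T ^ (1 - s) * |X a| ^ s) (hXs.const_mul _)
            (Eventually.of_forall fun a => abs_sub_clamp_le hs hT)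
      _ ≤ _ := by rw [integral_const_mul]; gcongr
  have c4 : |∫ a, g a ∂P| ≤ T := by
    have := norm_integral_le_of_norm_le_const (μ := P) (f := g) (C := T)
      (Eventually.of_forall fun a => hb _)
    simpa using this
  have c5 : |(∫ a, f a ∂P) * ∫ a, g a ∂P| ≤ T ^ (2 - s) * D := by
    rw [abs_mul]
    have hTT : T ^ (2 - s) = T ^ (1 - s) * T := by
      rw [← Real.rpow_add_one hT.ne']; ring_nf
    calc _ ≤ T ^ (1 - s) * D * T := mul_le_mul c3 c4 (abs_nonneg _) ((abs_nonneg _).trans c3)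
      _ = _ := by rw [hTT]; ring
  rw [abs_le] at *
  constructor <;> linarith [c1.1, c1.2, c2.1, c2.2, c5.1, c5.2]

/-! ### Block sums and their maxima -/

/-- The block sum `X_{s+1} + ⋯ + X_{s+j}`. -/
def blockSum {Ω : Type*} (X : ℕ → Ω → ℝ) (s j : ℕ) (a : Ω) : ℝ :=
  ∑ i ∈ Finset.range j, X (s + 1 + i) a

/-- The event that some block sum of length at most `N` starting after time `s` exceeds `x` in
absolute value. -/
def exceed {Ω : Type*} (X : ℕ → Ω → ℝ) (N s : ℕ) (x : ℝ) : Set Ω :=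
  {a | ∃ j ≤ N, x < |blockSum X s j a|}

lemma blockSum_add {Ω : Type*} (X : ℕ → Ω → ℝ) (s j l : ℕ) (a : Ω) :
    blockSum X s (j + l) a = blockSum X s j a + blockSum X (s + j) l a := by
  simp only [blockSum, Finset.sum_range_add]
  congr 1
  refine Finset.sum_congr rfl fun i _ => ?_
  congr 1; omega

lemma exceed_mono {Ω : Type*} (X : ℕ → Ω → ℝ) {N N' s : ℕ} {x x' : ℝ} (hN : N ≤ N')
    (hx : x' ≤ x) : exceed X N s x ⊆ exceed X N' s x' := by
  rintro a ⟨j, hj, h⟩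
  exact ⟨j, hj.trans hN, hx.trans_lt h⟩

lemma measurable_blockSum {Ω : Type*} (X : ℕ → Ω → ℝ) (m : MeasurableSpace Ω) (s j : ℕ)
    (h : ∀ i, s < i → i ≤ s + j → Measurable[m] (X i)) : Measurable[m] (blockSum X s j) := by
  unfold blockSum
  refine Finset.measurable_fun_sum _ fun i hi => h _ (by omega) ?_
  have := Finset.mem_range.1 hi
  omega

lemma measurableSet_lt_abs {Ω : Type*} (m : MeasurableSpace Ω) {f : Ω → ℝ} (hf : Measurable[m] f)
    (x : ℝ) : MeasurableSet[m] {a | x < |f a|} :=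
  measurableSet_lt measurable_const hf.abs

lemma measurableSet_exceed {Ω : Type*} (X : ℕ → Ω → ℝ) (m : MeasurableSpace Ω) (N s : ℕ) (x : ℝ)
    (h : ∀ i, s < i → i ≤ s + N → Measurable[m] (X i)) : MeasurableSet[m] (exceed X N s x) := by
  have : exceed X N s x = ⋃ j ∈ Set.Iic N, {a | x < |blockSum X s j a|} := by
    ext a; simp [exceed]
  rw [this]
  refine MeasurableSet.biUnion (Set.to_countable _) fun j hj => ?_
  have hm : Measurable[m] (blockSum X s j) :=
    measurable_blockSum X m s j fun i h1 h2 => h i h1 (h2.trans (Nat.add_le_add_left hj s))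
  exact measurableSet_lt_abs _ hm x

lemma measurable_sigmaUpTo {Ω : Type*} (X : ℕ → Ω → ℝ) {i ℓ : ℕ} (h : i ≤ ℓ) :
    Measurable[sigmaUpTo X ℓ] (X i) := by
  refine Measurable.mono (comap_measurable (X i)) ?_ le_rfl
  exact le_iSup₂_of_le (f := fun j (_ : j ∈ Set.Iic ℓ) =>
    MeasurableSpace.comap (X j) inferInstance) i h le_rfl

lemma measurable_sigmaFrom {Ω : Type*} (X : ℕ → Ω → ℝ) {i ℓ : ℕ} (h : ℓ ≤ i) :
    Measurable[sigmaFrom X ℓ] (X i) := by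
  refine Measurable.mono (comap_measurable (X i)) ?_ le_rfl
  exact le_iSup₂_of_le (f := fun j (_ : j ∈ Set.Ici ℓ) =>
    MeasurableSpace.comap (X j) inferInstance) i h le_rfl

lemma sigmaUpTo_le {Ω : Type*} (X : ℕ → Ω → ℝ) (ℓ : ℕ) (m : MeasurableSpace Ω)
    (h : ∀ i, i ≤ ℓ → Measurable[m] (X i)) : sigmaUpTo X ℓ ≤ m :=
  iSup₂_le fun i hi => (h i hi).comap_le

lemma sigmaFrom_le {Ω : Type*} (X : ℕ → Ω → ℝ) (ℓ : ℕ) (m : MeasurableSpace Ω)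
    (h : ∀ i, ℓ ≤ i → Measurable[m] (X i)) : sigmaFrom X ℓ ≤ m :=
  iSup₂_le fun i hi => (h i hi).comap_le

/-- Rademacher–Menshov type maximal inequality by dyadic splitting: a variance bound linear in
the length of the block costs only logarithmic factors when passing to maxima. -/
lemma measureReal_exceed_two_pow_le {Ω : Type*} [MeasurableSpace Ω] (P : Measure Ω)
    [IsProbabilityMeasure P] (X : ℕ → Ω → ℝ) {V : ℝ} (hV0 : 0 ≤ V)
    (hint : ∀ s n, Integrable (fun a => blockSum X s n a ^ 2) P)
    (hV : ∀ s n, ∫ a, blockSum X s n a ^ 2 ∂P ≤ V * n) {x : ℝ} (hx : 0 < x) (m s : ℕ) :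
    P.real (exceed X (2 ^ m) s ((m + 1) * x)) ≤ (m + 1) * V * 2 ^ m / x ^ 2 := by
  have cheb : ∀ s n : ℕ, P.real {a | x < |blockSum X s n a|} ≤ V * n / x ^ 2 := fun s n => by
    have h1 := mul_meas_ge_le_integral_of_nonneg (μ := P)
      (Eventually.of_forall fun a => sq_nonneg (blockSum X s n a)) (hint s n) (x ^ 2)
    rw [le_div_iff₀ (by positivity), mul_comm]
    refine le_trans ?_ (h1.trans (hV s n))
    refine mul_le_mul_of_nonneg_left (measureReal_mono fun a (ha : x < _) => ?_) (sq_nonneg x)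
    change x ^ 2 ≤ _
    rw [← sq_abs (blockSum X s n a)]
    gcongr
  induction m generalizing s with
  | zero =>
    refine le_trans (measureReal_mono ?_) ((cheb s 1).trans (by simp))
    rintro a ⟨j, hj, h⟩
    simp only [Nat.cast_zero, zero_add, one_mul, pow_zero] at h hj
    interval_cases j
    · simp [blockSum] at h; linarith
    · exact h
  | succ m ih =>
    have hsub : exceed X (2 ^ (m + 1)) s (((m + 1 : ℕ) + 1) * x) ⊆
        exceed X (2 ^ m) s ((m + 1) * x) ∪ ({a | x < |blockSum X s (2 ^ m) a|} ∪
          exceed X (2 ^ m) (s + 2 ^ m) ((m + 1) * x)) := by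
      rintro a ⟨j, hj, h⟩
      push_cast at h
      by_contra hcon
      simp only [Set.mem_union, not_or, exceed, Set.mem_ofPred_eq, not_exists, not_and,
        not_lt] at hcon
      obtain ⟨h1, h2, h3⟩ := hcon
      rcases le_or_gt j (2 ^ m) with hj' | hj'
      · have := h1 j hj'; nlinarith
      · obtain ⟨l, rfl⟩ := Nat.exists_eq_add_of_lt hj'
        rw [add_assoc (2 ^ m) l 1, blockSum_add] at h
        have := h3 (l + 1) (by rw [pow_succ] at hj; omega)
        have := abs_add_le (blockSum X s (2 ^ m) a) (blockSum X (s + 2 ^ m) (l + 1) a)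
        nlinarith
    calc _ ≤ _ := measureReal_mono hsub
      _ ≤ (m + 1) * V * 2 ^ m / x ^ 2 + (V * (2 ^ m : ℕ) / x ^ 2 +
          (m + 1) * V * 2 ^ m / x ^ 2) :=
        (measureReal_union_le _ _).trans (add_le_add (ih s)
          ((measureReal_union_le _ _).trans (add_le_add (cheb _ _) (ih _))))
      _ ≤ _ := by
        push_cast
        rw [← add_div, ← add_div, pow_succ (2 : ℝ)]
        gcongr
        have : 0 ≤ V * 2 ^ m := by positivity
        linarith

/-- Crude tail bound for maxima over short blocks, from Markov's inequality and convexity. -/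
lemma measureReal_exceed_le_of_moment {Ω : Type*} [MeasurableSpace Ω] (P : Measure Ω)
    [IsProbabilityMeasure P] (X : ℕ → Ω → ℝ) {v D : ℝ} (hv : 1 ≤ v)
    (hint : ∀ i, Integrable (fun a => |X i a| ^ v) P)
    (hD : ∀ i, ∫ a, |X i a| ^ v ∂P ≤ D) {x : ℝ} (hx : 0 < x) (n s : ℕ) :
    P.real (exceed X n s x) ≤ D * (n : ℝ) ^ v / x ^ v := by
  have h1 := mul_meas_ge_le_integral_of_nonneg (μ := P)
      (f := fun a => (n : ℝ) ^ (v - 1) * ∑ i ∈ Finset.range n, |X (s + 1 + i) a| ^ v)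
      (Eventually.of_forall fun a => by positivity)
      ((integrable_finsetSum _ fun i _ => hint _).const_mul _) (x ^ v)
  rw [integral_const_mul, integral_finsetSum _ fun i _ => hint _] at h1
  have h2 : ∑ i ∈ Finset.range n, ∫ a, |X (s + 1 + i) a| ^ v ∂P ≤ n * D := by
    simpa using Finset.sum_le_card_nsmul (Finset.range n) _ D fun i _ => hD (s + 1 + i)
  have hn : (n : ℝ) ^ (v - 1) * (n * D) = D * (n : ℝ) ^ v := by
    rcases Nat.eq_zero_or_pos n with rfl | hn
    · simp [Real.zero_rpow (by linarith : v ≠ 0)]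
    · have hn' : (0 : ℝ) < n := by exact_mod_cast hn
      have : (n : ℝ) ^ v = (n : ℝ) ^ (v - 1) * n := by
        rw [← Real.rpow_add_one hn'.ne']; ring_nf
      rw [this]; ring
  rw [le_div_iff₀ (by positivity), mul_comm, ← hn]
  refine le_trans ?_ (h1.trans (by gcongr))
  refine mul_le_mul_of_nonneg_left (measureReal_mono ?_) (by positivity)
  rintro a ⟨j, hj, h⟩
  have h3 : x ≤ ∑ i ∈ Finset.range n, |X (s + 1 + i) a| :=
    h.le.trans ((Finset.abs_sum_le_sum_abs _ _).trans
      (Finset.sum_le_sum_of_subset_of_nonneg (Finset.range_mono hj) fun _ _ _ => abs_nonneg _))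
  have h4 := Real.rpow_sum_le_const_mul_sum_rpow (Finset.range n) (fun i => X (s + 1 + i) a) hv
  rw [Finset.card_range] at h4
  exact (Real.rpow_le_rpow hx.le h3 (by linarith)).trans h4

/-- Hoffmann-Jørgensen type inequality under mixing. If the sums exceed `4 * x`, then either some
stretch of length `2 * q` moves by more than `x`, or the first passage above `x` is followed,
after a gap of length `q`, by an excursion of size `2 * x`; mixing over the gap makes the last two
events nearly independent, so the bound `β` gets squared. -/
lemma measureReal_exceed_four_mul_le {Ω : Type*} [m0 : MeasurableSpace Ω] (P : Measure Ω)
    [IsProbabilityMeasure P] (X : ℕ → Ω → ℝ) (hX : ∀ i, Measurable (X i))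
    {α β ω x : ℝ} (hx : 0 ≤ x) {q N : ℕ} (hq : 1 ≤ q)
    (hmix : ∀ ℓ A B, MeasurableSet[sigmaUpTo X ℓ] A → MeasurableSet[sigmaFrom X (ℓ + q)] B →
      |P.real (A ∩ B) - P.real A * P.real B| ≤ α)
    (hβ : ∀ s, P.real (exceed X N s x) ≤ β) (hω : ∀ s, P.real (exceed X (2 * q) s x) ≤ ω)
    (s : ℕ) :
    P.real (exceed X N s (4 * x)) ≤ β ^ 2 + ((N / q : ℕ) + 1) * (α + ω) := by
  set W := Finset.range (N / q + 1) with hW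
  -- `A w`: the first passage above `x` happens in the `w`-th window of length `q`
  set A : ℕ → Set Ω := fun w => (⋃ j ∈ Set.Ioc (w * q) ((w + 1) * q) ∩ Set.Iic N,
    {a | x < |blockSum X s j a|}) \ exceed X (w * q) s x with hA
  set B : ℕ → Set Ω := fun w => exceed X N (s + (w + 2) * q) (2 * x) with hB
  have hAm : ∀ w, MeasurableSet[sigmaUpTo X (s + (w + 1) * q)] (A w) := fun w => by
    refine @MeasurableSet.diff _ (sigmaUpTo X (s + (w + 1) * q)) _ _ ?_ (measurableSet_exceed X _ _ _ _ fun i _ h =>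
      measurable_sigmaUpTo X (h.trans (by gcongr; omega)))
    refine @MeasurableSet.biUnion _ _ (sigmaUpTo X (s + (w + 1) * q)) _ _ (Set.to_countable _)
      fun j hj => ?_
    have hm : Measurable[sigmaUpTo X (s + (w + 1) * q)] (blockSum X s j) :=
      measurable_blockSum X _ s j fun i h1 h2 =>
        measurable_sigmaUpTo X (h2.trans (Nat.add_le_add_left hj.1.2 s))
    exact measurableSet_lt_abs _ hm x
  have hBm : ∀ w, MeasurableSet[sigmaFrom X (s + (w + 1) * q + q)] (B w) := fun w =>
    measurableSet_exceed X _ _ _ _ fun i h _ => measurable_sigmaFrom X (by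
      have : (w + 2) * q = (w + 1) * q + q := by ring
      omega)
  have hAm0 : ∀ w, MeasurableSet[m0] (A w) := fun w =>
    sigmaUpTo_le X _ m0 (fun i _ => hX i) _ (hAm w)
  have hdisj : ∀ w w', w < w' → Disjoint (A w) (A w') := fun w w' hww => by
    rw [Set.disjoint_left]
    rintro a ⟨ha, _⟩ ⟨_, ha'⟩
    simp only [Set.mem_iUnion] at ha
    obtain ⟨j, hj, h⟩ := ha
    exact ha' ⟨j, hj.1.2.trans (Nat.mul_le_mul_right q hww), h⟩
  have hpair : (W : Set ℕ).PairwiseDisjoint A := fun w _ w' _ hne => by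
    rcases lt_or_gt_of_ne hne with h | h
    · exact hdisj _ _ h
    · exact (hdisj _ _ h).symm
  have hAsum : ∑ w ∈ W, P.real (A w) ≤ β := by
    rw [← measureReal_biUnion_finset hpair fun w _ => hAm0 w]
    refine (measureReal_mono ?_).trans (hβ s)
    intro a ha
    simp only [Set.mem_iUnion] at ha
    obtain ⟨w, -, ha, -⟩ := ha
    simp only [Set.mem_iUnion] at ha
    obtain ⟨j, hj, h⟩ := ha
    exact ⟨j, hj.2, h⟩
  have hAB : ∀ w, P.real (A w ∩ B w) ≤ P.real (A w) * β + α := fun w => by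
    have h1 := (abs_le.1 (hmix _ _ _ (hAm w) (hBm w))).2
    have h2 : P.real (B w) ≤ β :=
      (measureReal_mono (exceed_mono X le_rfl (by linarith))).trans (hβ _)
    have := mul_le_mul_of_nonneg_left h2 (measureReal_nonneg (μ := P) (s := A w))
    linarith
  have hsub : exceed X N s (4 * x) ⊆
      (⋃ w ∈ W, A w ∩ B w) ∪ ⋃ w ∈ W, exceed X (2 * q) (s + w * q) x := by
    rintro a ⟨j, hj, hj4⟩
    have hex : ∃ j, j ≤ N ∧ x < |blockSum X s j a| := ⟨j, hj, by linarith⟩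
    classical
    obtain ⟨hτN, hτx⟩ := Nat.find_spec hex
    have hmin : ∀ i, i < Nat.find hex → |blockSum X s i a| ≤ x := fun i hi => by
      have h1 := Nat.find_min hex hi
      rw [not_and, not_lt] at h1
      exact h1 (hi.le.trans hτN)
    have hτ0 : Nat.find hex ≠ 0 := fun h0 => by
      rw [h0] at hτx; simp [blockSum] at hτx; linarith
    -- `t + 1` is the first passage time above `x`
    obtain ⟨t, ht⟩ := Nat.exists_eq_succ_of_ne_zero hτ0
    rw [ht] at hτN hτx hmin
    set w := t / q with hw
    have hw1 : w * q ≤ t := Nat.div_mul_le_self t q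
    have hw2 : t < (w + 1) * q := by
      rw [hw, mul_comm]; exact Nat.lt_mul_div_succ t hq
    have hwW : w ∈ W := Finset.mem_range.2
      (Nat.lt_succ_of_le (Nat.div_le_div_right (by omega)))
    by_contra hcon
    simp only [Set.mem_union, Set.mem_iUnion, not_or, not_exists, Set.mem_inter_iff, not_and]
      at hcon
    obtain ⟨h1, h2⟩ := hcon
    have h2w := h2 w hwW
    have hAw : a ∈ A w := by
      refine ⟨?_, ?_⟩
      · simp only [Set.mem_iUnion]
        exact ⟨t + 1, ⟨⟨by omega, by omega⟩, hτN⟩, hτx⟩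
      · rintro ⟨i, hi, hxi⟩
        exact absurd (hmin i (by omega)) (not_le.2 hxi)
    have hBw := h1 w hwW hAw
    simp only [exceed, Set.mem_ofPred_eq, not_exists, not_and, not_lt, B] at h2w hBw
    have hbase := hmin (w * q) (by omega)
    have hjt : w * q ≤ j := by
      by_contra hlt
      have := hmin j (by omega)
      linarith
    obtain ⟨l, rfl⟩ := Nat.exists_eq_add_of_le hjt
    rcases le_or_gt l (2 * q) with hl | hl
    · have e1 := h2w l hl
      rw [blockSum_add] at hj4
      have := abs_add_le (blockSum X s (w * q) a) (blockSum X (s + w * q) l a)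
      linarith
    · obtain ⟨l', rfl⟩ := Nat.exists_eq_add_of_le hl.le
      have e1 := h2w (2 * q) le_rfl
      have e2 := hBw l' (by omega)
      rw [blockSum_add, blockSum_add] at hj4
      have hidx : s + w * q + 2 * q = s + (w + 2) * q := by ring
      rw [hidx] at hj4
      have i1 := abs_add_le (blockSum X s (w * q) a)
        (blockSum X (s + w * q) (2 * q) a + blockSum X (s + (w + 2) * q) l' a)
      have i2 := abs_add_le (blockSum X (s + w * q) (2 * q) a)
        (blockSum X (s + (w + 2) * q) l' a)
      linarith
  have hβ0 : 0 ≤ β := measureReal_nonneg.trans (hβ s)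
  have hcard : (W.card : ℝ) = (N / q : ℕ) + 1 := by rw [hW, Finset.card_range]; push_cast; ring
  calc _ ≤ _ := measureReal_mono hsub
    _ ≤ ∑ w ∈ W, P.real (A w ∩ B w) + ∑ w ∈ W, P.real (exceed X (2 * q) (s + w * q) x) :=
      (measureReal_union_le _ _).trans (add_le_add (measureReal_biUnion_finset_le _ _)
        (measureReal_biUnion_finset_le _ _))
    _ ≤ ∑ w ∈ W, (P.real (A w) * β + α) + ∑ w ∈ W, ω :=
      add_le_add (Finset.sum_le_sum fun w _ => hAB w) (Finset.sum_le_sum fun w _ => hω _)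
    _ = (∑ w ∈ W, P.real (A w)) * β + ((N / q : ℕ) + 1) * (α + ω) := by
      rw [Finset.sum_add_distrib, ← Finset.sum_mul, Finset.sum_const, Finset.sum_const,
        nsmul_eq_mul, nsmul_eq_mul, hcard]
      ring
    _ ≤ _ := by rw [sq]; gcongr

/-- Summable covariance bounds make the variance of block sums grow at most linearly. -/
lemma exists_variance_blockSum_le {Ω : Type*} [MeasurableSpace Ω] (P : Measure Ω)
    [IsProbabilityMeasure P] (X : ℕ → Ω → ℝ) (hX : ∀ i, MemLp (X i) 2 P) {K ρ : ℝ} (hρ : 1 < ρ)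
    (hK0 : 0 ≤ K) (hK : ∀ i, ∫ a, X i a ^ 2 ∂P ≤ K)
    (hcov : ∀ i k : ℕ, 1 ≤ k → |∫ a, X i a * X (i + k) a ∂P| ≤ K * (k : ℝ) ^ (-ρ)) :
    ∃ V : ℝ, 0 ≤ V ∧ ∀ s n, ∫ a, blockSum X s n a ^ 2 ∂P ≤ V * n := by
  have hsum : Summable fun k : ℕ => ((k + 1 : ℕ) : ℝ) ^ (-ρ) :=
    (summable_nat_add_iff 1).2 (Real.summable_nat_rpow.2 (by linarith : -ρ < -1))
  set Z := ∑' k : ℕ, ((k + 1 : ℕ) : ℝ) ^ (-ρ) with hZ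
  have hZ0 : 0 ≤ Z := tsum_nonneg fun k => by positivity
  refine ⟨K + 2 * (K * Z), by positivity, fun s n => ?_⟩
  have hb : ∀ n, MemLp (blockSum X s n) 2 P := fun n =>
    memLp_finsetSum (Finset.range n) fun i _ => hX (s + 1 + i)
  induction n with
  | zero => simp [blockSum]
  | succ n ih =>
    have e : ∀ a, blockSum X s (n + 1) a ^ 2 = blockSum X s n a ^ 2 +
        2 * ∑ i ∈ Finset.range n, X (s + 1 + i) a * X (s + 1 + n) a + X (s + 1 + n) a ^ 2 :=
      fun a => by
        have : blockSum X s (n + 1) a = blockSum X s n a + X (s + 1 + n) a := by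
          simp [blockSum, Finset.sum_range_succ]
        rw [this, ← Finset.sum_mul]
        change _ = _ + 2 * (blockSum X s n a * _) + _
        ring
    have hprod : ∀ i, Integrable (fun a => X (s + 1 + i) a * X (s + 1 + n) a) P := fun i =>
      (hX (s + 1 + i)).integrable_mul (hX (s + 1 + n))
    have i1 : Integrable (fun a => ∑ i ∈ Finset.range n, X (s + 1 + i) a * X (s + 1 + n) a) P :=
      integrable_finsetSum _ fun i _ => hprod i
    have i2 : Integrable (fun a => blockSum X s n a ^ 2 +
        2 * ∑ i ∈ Finset.range n, X (s + 1 + i) a * X (s + 1 + n) a) P :=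
      (hb n).integrable_sq.add (i1.const_mul 2)
    simp_rw [e]
    rw [integral_add i2 (hX _).integrable_sq, integral_add (hb n).integrable_sq (i1.const_mul 2),
      integral_const_mul, integral_finsetSum _ fun i _ => hprod i]
    have hcr : ∑ i ∈ Finset.range n, ∫ a, X (s + 1 + i) a * X (s + 1 + n) a ∂P ≤ K * Z := by
      calc _ ≤ ∑ i ∈ Finset.range n, K * ((n - 1 - i + 1 : ℕ) : ℝ) ^ (-ρ) := by
            refine Finset.sum_le_sum fun i hi => ?_
            have hi' := Finset.mem_range.1 hi
            have h1 := hcov (s + 1 + i) (n - 1 - i + 1) (by omega)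
            have h2 : s + 1 + i + (n - 1 - i + 1) = s + 1 + n := by omega
            rw [h2] at h1
            exact (le_abs_self _).trans h1
        _ = K * ∑ i ∈ Finset.range n, ((i + 1 : ℕ) : ℝ) ^ (-ρ) := by
            rw [← Finset.mul_sum,
              Finset.sum_range_reflect (fun i => ((i + 1 : ℕ) : ℝ) ^ (-ρ)) n]
        _ ≤ K * Z := by
            gcongr
            exact hsum.sum_le_tsum _ fun i _ => by positivity
    have := hK (s + 1 + n)
    push_cast
    linarith

/-! ### Polynomial tail bounds -/

/-- Maxima of block sums over `N` steps exceed `κ * N ^ b` with probability `O(N ^ (-c))`,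
uniformly in the starting point, for every `κ > 0`. -/
def TailBound {Ω : Type*} [MeasurableSpace Ω] (P : Measure Ω) (X : ℕ → Ω → ℝ) (b c : ℝ) : Prop :=
  ∀ κ : ℝ, 0 < κ → ∃ C : ℝ, 0 ≤ C ∧ ∀ N : ℕ, 1 ≤ N → ∀ s,
    P.real (exceed X N s (κ * (N : ℝ) ^ b)) ≤ C * (N : ℝ) ^ (-c)

lemma tailBound_of_variance {Ω : Type*} [MeasurableSpace Ω] (P : Measure Ω)
    [IsProbabilityMeasure P] (X : ℕ → Ω → ℝ) {V : ℝ} (hV0 : 0 ≤ V)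
    (hint : ∀ s n, Integrable (fun a => blockSum X s n a ^ 2) P)
    (hV : ∀ s n, ∫ a, blockSum X s n a ^ 2 ∂P ≤ V * n) {b c : ℝ} (hc : c < 2 * b - 1) :
    TailBound P X b c := by
  intro κ hκ
  obtain ⟨η, hη, hη3⟩ : ∃ η : ℝ, 0 < η ∧ 1 + 3 * η - 2 * b = -c :=
    ⟨(2 * b - 1 - c) / 3, by linarith, by ring⟩
  set L := 2 + 1 / (η * Real.log 2) with hL
  have hlog2 : 0 < Real.log 2 := Real.log_pos (by norm_num)
  have hL0 : 0 < L := by positivity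
  refine ⟨2 * V * L ^ 3 / κ ^ 2, by positivity, fun N hN s => ?_⟩
  have hN' : (1 : ℝ) ≤ N := by exact_mod_cast hN
  have hN0 : (0 : ℝ) < N := by linarith
  set m := Nat.log 2 N + 1 with hm
  have hm1 : N ≤ 2 ^ m := (Nat.lt_pow_succ_log_self (by norm_num) N).le
  have hm2 : (2 : ℝ) ^ m ≤ 2 * N := by
    have := Nat.pow_log_le_self 2 (by omega : N ≠ 0)
    have h2 : (2 : ℝ) ^ Nat.log 2 N ≤ N := by exact_mod_cast this
    rw [hm, pow_succ]; linarith
  have hmL : (m : ℝ) + 1 ≤ L * (N : ℝ) ^ η := by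
    have h1 : (Nat.log 2 N : ℝ) ≤ Real.logb 2 N := by exact_mod_cast Real.natLog_le_logb N 2
    have h2 : Real.log N ≤ (N : ℝ) ^ η / η := Real.log_le_rpow_div hN0.le hη
    have h3 : Real.logb 2 N ≤ 1 / (η * Real.log 2) * (N : ℝ) ^ η := by
      rw [Real.logb, div_le_iff₀ hlog2]
      refine h2.trans (le_of_eq ?_)
      field_simp
    have h4 : (1 : ℝ) ≤ (N : ℝ) ^ η := Real.one_le_rpow hN' hη.le
    rw [hm, hL]; push_cast
    linarith
  have hm0 : (0 : ℝ) < m + 1 := by positivity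
  have hb0 : 0 < (N : ℝ) ^ b := by positivity
  have key := measureReal_exceed_two_pow_le P X hV0 hint hV
    (x := κ * (N : ℝ) ^ b / (m + 1)) (by positivity) m s
  have e : ((m : ℝ) + 1) * (κ * (N : ℝ) ^ b / (m + 1)) = κ * (N : ℝ) ^ b := by field_simp
  rw [e] at key
  refine (measureReal_mono (exceed_mono X hm1 le_rfl)).trans (key.trans ?_)
  have e2 : ((m : ℝ) + 1) * V * 2 ^ m / (κ * (N : ℝ) ^ b / (m + 1)) ^ 2
      = (m + 1) ^ 3 * V * 2 ^ m / (κ ^ 2 * ((N : ℝ) ^ b) ^ 2) := by field_simp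
  rw [e2]
  calc _ ≤ (L * (N : ℝ) ^ η) ^ 3 * V * (2 * N) / (κ ^ 2 * ((N : ℝ) ^ b) ^ 2) := by gcongr
    _ = 2 * V * L ^ 3 / κ ^ 2 * (((N : ℝ) ^ η) ^ 3 * N / ((N : ℝ) ^ b) ^ 2) := by
      field_simp
    _ = 2 * V * L ^ 3 / κ ^ 2 * (N : ℝ) ^ (-c) := by
      congr 1
      rw [← Real.rpow_mul_natCast hN0.le, ← Real.rpow_mul_natCast hN0.le,
        ← Real.rpow_add_one hN0.ne', ← Real.rpow_sub hN0, ← hη3]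
      congr 1; push_cast; ring

/-- One round of the Hoffmann-Jørgensen inequality with gaps of length about `N ^ a`: the exponent
of the tail bound doubles, up to the cap `c'` dictated by mixing and by short blocks. -/
lemma TailBound.double {Ω : Type*} [MeasurableSpace Ω] (P : Measure Ω)
    [IsProbabilityMeasure P] (X : ℕ → Ω → ℝ) (hX : ∀ i, Measurable (X i)) {v D : ℝ} (hv : 1 ≤ v)
    (hD0 : 0 ≤ D) (hint : ∀ i, Integrable (fun a => |X i a| ^ v) P)
    (hD : ∀ i, ∫ a, |X i a| ^ v ∂P ≤ D) {Cm θ : ℝ} (hCm : 0 ≤ Cm) (hθ : 0 < θ)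
    (hmix : ∀ k : ℕ, 1 ≤ k → ∀ ℓ A B, MeasurableSet[sigmaUpTo X ℓ] A →
      MeasurableSet[sigmaFrom X (ℓ + k)] B →
      |P.real (A ∩ B) - P.real A * P.real B| ≤ Cm * (k : ℝ) ^ (-θ))
    {a b c c' : ℝ} (ha0 : 0 < a) (ha1 : a ≤ 1) (h1 : c' ≤ a * θ + a - 1)
    (h2 : c' ≤ b * v - a * v + a - 1) (hc : TailBound P X b c) :
    TailBound P X b (min (2 * c) c') := by
  intro κ hκ
  obtain ⟨C, hC0, hC⟩ := hc (κ / 4) (by positivity)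
  set Dω := D * (16 / κ) ^ v with hDω
  refine ⟨C ^ 2 + 2 * (Cm + Dω), by positivity, fun N hN s => ?_⟩
  have hN' : (1 : ℝ) ≤ N := by exact_mod_cast hN
  have hN0 : (0 : ℝ) < N := by linarith
  have hNa : (1 : ℝ) ≤ (N : ℝ) ^ a := Real.one_le_rpow hN' ha0.le
  set q := ⌈(N : ℝ) ^ a⌉₊ with hq
  have hq1 : (N : ℝ) ^ a ≤ q := Nat.le_ceil _
  have hq2 : (q : ℝ) ≤ 2 * (N : ℝ) ^ a := by
    have := (Nat.ceil_lt_add_one (by linarith : 0 ≤ (N : ℝ) ^ a)).le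
    linarith
  have hq0 : 1 ≤ q := by
    have : (1 : ℝ) ≤ q := hNa.trans hq1
    exact_mod_cast this
  set x := κ / 4 * (N : ℝ) ^ b with hx
  have hx0 : 0 < x := by positivity
  have hω : ∀ s, P.real (exceed X (2 * q) s x) ≤ Dω * (N : ℝ) ^ (a * v - b * v) := fun s => by
    refine (measureReal_exceed_le_of_moment P X hv hint hD hx0 (2 * q) s).trans ?_
    have e1 : ((2 * q : ℕ) : ℝ) ≤ 4 * (N : ℝ) ^ a := by push_cast; linarith
    calc D * ((2 * q : ℕ) : ℝ) ^ v / x ^ v ≤ D * (4 * (N : ℝ) ^ a) ^ v / x ^ v := by gcongr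
      _ = Dω * (N : ℝ) ^ (a * v - b * v) := by
        have e2 : 4 * (N : ℝ) ^ a / x = 16 / κ * (N : ℝ) ^ (a - b) := by
          rw [hx, Real.rpow_sub hN0]; field_simp; norm_num
        rw [mul_div_assoc, ← Real.div_rpow (by positivity) hx0.le, e2,
          Real.mul_rpow (by positivity) (by positivity), ← Real.rpow_mul hN0.le, hDω, sub_mul]
        ring
  have key := measureReal_exceed_four_mul_le P X hX hx0.le hq0 (hmix q hq0)
    (fun s => hC N hN s) hω s
  have e4 : 4 * x = κ * (N : ℝ) ^ b := by rw [hx]; ring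
  rw [e4] at key
  refine key.trans ?_
  have hdiv : ((N / q : ℕ) : ℝ) + 1 ≤ 2 * (N : ℝ) ^ (1 - a) := by
    have h3 : ((N / q : ℕ) : ℝ) ≤ N / q := Nat.cast_div_le
    have h4 : (N : ℝ) / q ≤ (N : ℝ) ^ (1 - a) := by
      rw [Real.rpow_sub hN0, Real.rpow_one]
      gcongr
    have h5 : (1 : ℝ) ≤ (N : ℝ) ^ (1 - a) := Real.one_le_rpow hN' (by linarith)
    linarith
  have hqθ : (q : ℝ) ^ (-θ) ≤ (N : ℝ) ^ (-(a * θ)) := by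
    rw [← mul_neg, Real.rpow_mul hN0.le]
    exact Real.rpow_le_rpow_of_nonpos (by linarith) hq1 (by linarith)
  have hmin1 : ∀ t, t ≤ -(min (2 * c) c') → (N : ℝ) ^ t ≤ (N : ℝ) ^ (-(min (2 * c) c')) :=
    fun t ht => Real.rpow_le_rpow_of_exponent_le hN' ht
  have p1 : ((N : ℝ) ^ (-c)) ^ 2 ≤ (N : ℝ) ^ (-(min (2 * c) c')) := by
    rw [← Real.rpow_mul_natCast hN0.le]
    refine hmin1 _ ?_
    have := min_le_left (2 * c) c'
    push_cast; linarith
  have hmr := min_le_right (2 * c) c'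
  have p2 : (N : ℝ) ^ (1 - a) * (N : ℝ) ^ (-(a * θ)) ≤ (N : ℝ) ^ (-(min (2 * c) c')) := by
    rw [← Real.rpow_add hN0]; exact hmin1 _ (by linarith)
  have p3 : (N : ℝ) ^ (1 - a) * (N : ℝ) ^ (a * v - b * v) ≤ (N : ℝ) ^ (-(min (2 * c) c')) := by
    rw [← Real.rpow_add hN0]; exact hmin1 _ (by linarith)
  have hDω0 : 0 ≤ Dω := by positivity
  calc _ ≤ (C * (N : ℝ) ^ (-c)) ^ 2 + 2 * (N : ℝ) ^ (1 - a) *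
        (Cm * (N : ℝ) ^ (-(a * θ)) + Dω * (N : ℝ) ^ (a * v - b * v)) := by gcongr
    _ = C ^ 2 * ((N : ℝ) ^ (-c)) ^ 2 + 2 * (Cm * ((N : ℝ) ^ (1 - a) * (N : ℝ) ^ (-(a * θ))) +
        Dω * ((N : ℝ) ^ (1 - a) * (N : ℝ) ^ (a * v - b * v))) := by ring
    _ ≤ C ^ 2 * (N : ℝ) ^ (-(min (2 * c) c')) + 2 * (Cm * (N : ℝ) ^ (-(min (2 * c) c')) +
        Dω * (N : ℝ) ^ (-(min (2 * c) c'))) := by gcongr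
    _ = _ := by ring

/-! ### Borel–Cantelli along the squares -/

/-- Deterministic blocking: a gap between consecutive squares is of the order of the square root,
so for large `k` every window `(k, k + j]` with `j ≤ u (k log k)^{1/2}` lies in the block of length
`m ^ (1 + ρ)` after `m ^ 2`, where `m = ⌊√k⌋`. -/
lemma eventually_window_le {u ρ : ℝ} (hρ : 0 < ρ) :
    ∀ᶠ k : ℕ in atTop, ∀ j : ℕ, (j : ℝ) ≤ u * Real.sqrt ((k : ℝ) * Real.log k) →
      k - Nat.sqrt k ^ 2 + j ≤ ⌈(Nat.sqrt k : ℝ) ^ (1 + ρ)⌉₊ := by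
  have hlim : Tendsto (fun k : ℕ => Real.sqrt k) atTop atTop :=
    Real.tendsto_sqrt_atTop.comp tendsto_natCast_atTop_atTop
  have hlog : ∀ᶠ k : ℕ in atTop, Real.log k ≤ (k : ℝ) ^ (ρ / 2) := by
    have := ((isLittleO_log_rpow_atTop (half_pos hρ)).bound one_pos)
    filter_upwards [tendsto_natCast_atTop_atTop.eventually this, eventually_ge_atTop 1]
      with k hk _
    rw [one_mul, Real.norm_of_nonneg (by positivity : 0 ≤ (k : ℝ) ^ (ρ / 2))] at hk
    exact (le_abs_self _).trans hk
  have hbig : ∀ᶠ k : ℕ in atTop, (2 + |u|) * 2 ^ (1 + ρ) ≤ Real.sqrt k ^ (ρ / 2) :=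
    ((tendsto_rpow_atTop (half_pos hρ)).comp hlim).eventually_ge_atTop _
  filter_upwards [hlog, hbig, hlim.eventually_ge_atTop 2] with k h1 h2 h3 j hj
  set y := Real.sqrt k with hy
  set m := Nat.sqrt k with hm
  have hy0 : 0 < y := by linarith
  have hyk : y ^ 2 = k := Real.sq_sqrt (Nat.cast_nonneg k)
  have hm1 : k ≤ m * m + m + m := Nat.sqrt_le_add k
  have hm2 : m * m ≤ k := Nat.sqrt_le k
  have hmy : (m : ℝ) ≤ y := by
    rw [hy]; exact Real.nat_sqrt_le_real_sqrt
  have hym : y / 2 ≤ m := by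
    have : y ≤ m + 1 := by rw [hy]; exact Real.real_sqrt_le_nat_sqrt_succ
    linarith
  have hsq : Real.sqrt ((k : ℝ) * Real.log k) ≤ y * y ^ (ρ / 2) := by
    rw [Real.sqrt_le_left (by positivity)]
    have e : (y * y ^ (ρ / 2)) ^ 2 = k * (k : ℝ) ^ (ρ / 2) := by
      rw [mul_pow, ← Real.rpow_natCast (y ^ (ρ / 2)), ← Real.rpow_mul hy0.le, mul_comm (ρ / 2),
        Real.rpow_mul hy0.le, Real.rpow_natCast, hyk]
    rw [e]; gcongr
  have hyρ : 1 ≤ y ^ (ρ / 2) := Real.one_le_rpow (by linarith) (by linarith)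
  have hj2 : (j : ℝ) ≤ |u| * (y * y ^ (ρ / 2)) :=
    hj.trans ((mul_le_mul_of_nonneg_right (le_abs_self u) (Real.sqrt_nonneg _)).trans
      (mul_le_mul_of_nonneg_left hsq (abs_nonneg u)))
  have hk2 : ((k - m ^ 2 : ℕ) : ℝ) ≤ 2 * y := by
    have : k - m ^ 2 ≤ 2 * m := by rw [sq]; omega
    have : ((k - m ^ 2 : ℕ) : ℝ) ≤ 2 * m := by exact_mod_cast this
    linarith
  have hfin : (2 + |u|) * (y * y ^ (ρ / 2)) ≤ (m : ℝ) ^ (1 + ρ) := by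
    have e1 : (y / 2) ^ (1 + ρ) ≤ (m : ℝ) ^ (1 + ρ) := by gcongr
    refine le_trans ?_ e1
    have e2 : y ^ (1 + ρ) = y * y ^ (ρ / 2) * y ^ (ρ / 2) := by
      rw [Real.rpow_add hy0, Real.rpow_one, mul_assoc, ← Real.rpow_add hy0]; ring_nf
    rw [Real.div_rpow hy0.le (by norm_num), le_div_iff₀ (by positivity), e2]
    calc _ = y * y ^ (ρ / 2) * ((2 + |u|) * 2 ^ (1 + ρ)) := by ring
      _ ≤ _ := by gcongr
  have : ((k - m ^ 2 + j : ℕ) : ℝ) ≤ (m : ℝ) ^ (1 + ρ) := by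
    push_cast
    nlinarith
  exact Nat.cast_le.1 (this.trans (Nat.le_ceil _))

/-- The events of the tail bound for the blocks of length `N m = ⌈m ^ (1 + ρ)⌉` after `m ^ 2` have
summable probabilities, and a window sum is the difference of two sums started at `m ^ 2`. -/
lemma ae_eventually_le_of_tailBound {Ω : Type*} [MeasurableSpace Ω] (P : Measure Ω)
    [IsProbabilityMeasure P] (X : ℕ → Ω → ℝ) {b c p : ℝ} (hb : 0 < b) (hbp : b < 2 * p)
    (hc : 1 < c) (hT : TailBound P X b c) (u : ℝ) :
    ∀ᵐ a ∂P, ∀ ε : ℝ, 0 < ε → ∀ᶠ k : ℕ in atTop, ∀ j : ℕ,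
      (j : ℝ) ≤ u * Real.sqrt ((k : ℝ) * Real.log k) →
      |blockSum X k j a| ≤ ε * (k : ℝ) ^ p := by
  obtain ⟨ρ, hρ, hρb⟩ : ∃ ρ : ℝ, 0 < ρ ∧ (1 + ρ) * b < 2 * p := by
    refine ⟨(2 * p - b) / (2 * b), div_pos (by linarith) (by linarith), ?_⟩
    have : (1 + (2 * p - b) / (2 * b)) * b = b + (2 * p - b) / 2 := by field_simp
    rw [this]; linarith
  obtain ⟨C, hC0, hC⟩ := hT 1 one_pos
  set N : ℕ → ℕ := fun m => ⌈(m : ℝ) ^ (1 + ρ)⌉₊ with hN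
  have hNm : ∀ m : ℕ, 1 ≤ m → m ≤ N m := fun m hm => by
    have h1 : (1 : ℝ) ≤ m := by exact_mod_cast hm
    have h2 : (m : ℝ) ≤ (m : ℝ) ^ (1 + ρ) := by
      simpa using Real.rpow_le_rpow_of_exponent_le h1 (by linarith : (1 : ℝ) ≤ 1 + ρ)
    exact Nat.cast_le.1 (h2.trans (Nat.le_ceil _))
  have hsum : Summable fun m : ℕ => P.real (exceed X (N m) (m ^ 2) (1 * (N m : ℝ) ^ b)) := by
    have hs : Summable fun m : ℕ => C * (m : ℝ) ^ (-c) :=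
      (Real.summable_nat_rpow.2 (by linarith : -c < -1)).mul_left C
    refine (summable_nat_add_iff 1).1 (Summable.of_nonneg_of_le (fun _ => measureReal_nonneg)
      (fun m => ?_) ((summable_nat_add_iff 1).2 hs))
    have h1 := hNm (m + 1) (by omega)
    refine (hC _ (by omega) _).trans ?_
    exact mul_le_mul_of_nonneg_left (Real.rpow_le_rpow_of_nonpos (by positivity)
      (Nat.cast_le.2 h1) (by linarith)) hC0
  have hBC := ae_eventually_notMem (μ := P)
    (s := fun m => exceed X (N m) (m ^ 2) (1 * (N m : ℝ) ^ b)) (by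
      have : ∀ m : ℕ, P (exceed X (N m) (m ^ 2) (1 * (N m : ℝ) ^ b)) =
          ENNReal.ofReal (P.real (exceed X (N m) (m ^ 2) (1 * (N m : ℝ) ^ b))) := fun m => by
        simp [Measure.real]
      simp_rw [this]
      exact hsum.tsum_ofReal_ne_top)
  filter_upwards [hBC] with a ha ε hε
  have hsqrt : Tendsto Nat.sqrt atTop atTop :=
    tendsto_atTop.2 fun n => (eventually_ge_atTop (n * n)).mono fun k hk => Nat.le_sqrt.2 hk
  have hgap : 0 < p - (1 + ρ) * b / 2 := by linarith
  have hsmall : ∀ᶠ k : ℕ in atTop, 2 * 2 ^ b / ε ≤ (k : ℝ) ^ (p - (1 + ρ) * b / 2) :=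
    ((tendsto_rpow_atTop hgap).comp tendsto_natCast_atTop_atTop).eventually_ge_atTop _
  filter_upwards [hsqrt.eventually ha, eventually_window_le (u := u) hρ, hsmall,
    eventually_ge_atTop 1] with k h1 h2 h3 hk1 j hj
  have h4 := h2 j hj
  set m := Nat.sqrt k with hm
  have hm1 : 1 ≤ m := Nat.le_sqrt.2 (by omega)
  have hm2 : m ^ 2 ≤ k := Nat.sqrt_le' k
  simp only [exceed, Set.mem_ofPred_eq, not_exists, not_and, not_lt, one_mul] at h1
  have e1 := h1 (k - m ^ 2 + j) h4
  have e2 := h1 (k - m ^ 2) ((Nat.le_add_right _ _).trans h4)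
  have e3 := blockSum_add X (m ^ 2) (k - m ^ 2) j a
  rw [Nat.add_sub_cancel' hm2] at e3
  have hk0 : (0 : ℝ) < k := by exact_mod_cast hk1
  have hmr : (1 : ℝ) ≤ m := by exact_mod_cast hm1
  have hmk : (m : ℝ) ≤ (k : ℝ) ^ (1 / 2 : ℝ) := by
    rw [← Real.sqrt_eq_rpow]; exact Real.nat_sqrt_le_real_sqrt
  have hmρ : (1 : ℝ) ≤ (m : ℝ) ^ (1 + ρ) := Real.one_le_rpow hmr (by linarith)
  have hNb : (N m : ℝ) ^ b ≤ 2 ^ b * (k : ℝ) ^ ((1 + ρ) * b / 2) := by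
    have f1 : (N m : ℝ) ≤ 2 * (m : ℝ) ^ (1 + ρ) := by
      have := (Nat.ceil_lt_add_one (by linarith : 0 ≤ (m : ℝ) ^ (1 + ρ))).le
      linarith
    have f2 : (N m : ℝ) ≤ 2 * (k : ℝ) ^ ((1 + ρ) / 2) := by
      refine f1.trans ?_
      have : (k : ℝ) ^ ((1 + ρ) / 2) = ((k : ℝ) ^ (1 / 2 : ℝ)) ^ (1 + ρ) := by
        rw [← Real.rpow_mul hk0.le]; ring_nf
      rw [this]; gcongr
    calc (N m : ℝ) ^ b ≤ (2 * (k : ℝ) ^ ((1 + ρ) / 2)) ^ b := by gcongr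
      _ = _ := by
        rw [Real.mul_rpow (by norm_num) (by positivity), ← Real.rpow_mul hk0.le]; ring_nf
  have hfin : 2 * (2 ^ b * (k : ℝ) ^ ((1 + ρ) * b / 2)) ≤ ε * (k : ℝ) ^ p := by
    have g1 : (k : ℝ) ^ p = (k : ℝ) ^ (p - (1 + ρ) * b / 2) * (k : ℝ) ^ ((1 + ρ) * b / 2) := by
      rw [← Real.rpow_add hk0]; ring_nf
    rw [div_le_iff₀ hε] at h3
    rw [g1]
    calc _ = 2 * 2 ^ b * (k : ℝ) ^ ((1 + ρ) * b / 2) := by ring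
      _ ≤ (k : ℝ) ^ (p - (1 + ρ) * b / 2) * ε * (k : ℝ) ^ ((1 + ρ) * b / 2) := by gcongr
      _ = _ := by ring
  have hb2 : |blockSum X k j a| ≤ 2 * (N m : ℝ) ^ b := by
    have : blockSum X k j a
        = blockSum X (m ^ 2) (k - m ^ 2 + j) a - blockSum X (m ^ 2) (k - m ^ 2) a := by
      rw [e3]; ring
    rw [this]
    have := abs_sub (blockSum X (m ^ 2) (k - m ^ 2 + j) a) (blockSum X (m ^ 2) (k - m ^ 2) a)
    linarith
  linarith

/-! ### Assembling the tail bound -/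

/-- The exponent `c > 1` is what Borel–Cantelli along the squares needs. The variance bound alone
gives `c = 4 / r`, enough for `r < 4`; otherwise this exponent is doubled repeatedly. -/
lemma tailBound_of_mixing {Ω : Type*} [MeasurableSpace Ω] (P : Measure Ω)
    [IsProbabilityMeasure P] (X : ℕ → Ω → ℝ) (hX : ∀ i, Measurable (X i))
    (hX0 : ∀ i, ∫ a, X i a ∂P = 0) {v D : ℝ} (hv : 2 < v)
    (hLp : ∀ i, MemLp (X i) (ENNReal.ofReal v) P)
    (hD : ∀ i, ∫ a, |X i a| ^ v ∂P ≤ D) {Cm θ : ℝ} (hCm : 0 ≤ Cm)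
    (hmix : ∀ k : ℕ, 1 ≤ k → ∀ ℓ A B, MeasurableSet[sigmaUpTo X ℓ] A →
      MeasurableSet[sigmaFrom X (ℓ + k)] B →
      |P.real (A ∩ B) - P.real A * P.real B| ≤ Cm * (k : ℝ) ^ (-θ))
    {r b : ℝ} (hr : 2 < r) (hrv : r < v) (hθ : r * v / (2 * (v - r)) < θ)
    (hb : 1 / 2 + 2 / r < b) : ∃ c, 1 < c ∧ TailBound P X b c := by
  have hv0 : 0 < v := by linarith
  have hr0 : 0 < r := by linarith
  have hD0 : 0 ≤ D := (integral_nonneg fun a => by positivity).trans (hD 0)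
  have hint : ∀ i, Integrable (fun a => |X i a| ^ v) P := fun i => by
    have := (hLp i).integrable_norm_rpow (by simpa using hv0) ENNReal.ofReal_ne_top
    simpa [ENNReal.toReal_ofReal hv0.le] using this
  have hL2 : ∀ i, MemLp (X i) 2 P := fun i => (hLp i).mono_exponent (by
    rw [← ENNReal.ofReal_ofNat]; exact ENNReal.ofReal_le_ofReal hv.le)
  have hL1 : ∀ i, Integrable (X i) P := fun i => (hL2 i).integrable (by norm_num)
  have hθr : r / 2 < θ := by
    refine lt_of_le_of_lt ?_ hθ
    rw [div_le_div_iff₀ (by norm_num) (by linarith)]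
    nlinarith
  -- the exponent of the covariance decay
  have hρ : 1 < θ * (1 - 2 / v) := by
    have h1 : r * v < θ * (2 * (v - r)) := (div_lt_iff₀ (by linarith)).1 hθ
    have h2 : θ * (1 - 2 / v) = θ * (v - 2) / v := by field_simp
    rw [h2, lt_div_iff₀ hv0, one_mul]
    nlinarith
  have hsq : ∀ i, ∫ a, X i a ^ 2 ∂P ≤ 1 + D := fun i => by
    calc ∫ a, X i a ^ 2 ∂P ≤ ∫ a, (1 + |X i a| ^ v) ∂P := by
          refine integral_mono (hL2 i).integrable_sq ((integrable_const _).add (hint i)) fun a => ?_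
          change X i a ^ 2 ≤ 1 + |X i a| ^ v
          rw [← sq_abs]
          rcases le_total |X i a| 1 with h | h
          · have : |X i a| ^ 2 ≤ 1 := pow_le_one₀ (abs_nonneg _) h
            have := Real.rpow_nonneg (abs_nonneg (X i a)) v
            linarith
          · have := Real.rpow_le_rpow_of_exponent_le h hv.le
            rw [Real.rpow_two] at this
            linarith
      _ = 1 + ∫ a, |X i a| ^ v ∂P := by rw [integral_add (integrable_const _) (hint i)]; simp
      _ ≤ _ := by gcongr; exact hD i
  obtain ⟨V, hV0, hV⟩ := exists_variance_blockSum_le P X hL2 (K := 4 * Cm + 3 * D + (1 + D)) hρ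
    (by positivity) (fun i => (hsq i).trans (by linarith)) (fun i k hk => by
      have hk0 : (0 : ℝ) < k := by exact_mod_cast hk
      -- the truncation level `k ^ (θ / v)` balances the two error terms
      have h1 := abs_integral_mul_le_of_mixing (sigmaUpTo_le X i _ fun i _ => hX i)
        (sigmaFrom_le X (i + k) _ fun i _ => hX i) P (hmix k hk i) hv
        (T := (k : ℝ) ^ (θ / v)) (by positivity) (measurable_sigmaUpTo X le_rfl)
        (measurable_sigmaFrom X le_rfl) (hL1 i) (hX0 i) ((hL2 i).integrable_mul (hL2 (i + k)))
        (hint i) (hD i) (hint (i + k)) (hD (i + k))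
      refine h1.trans ?_
      have e1 : ((k : ℝ) ^ (θ / v)) ^ 2 * (k : ℝ) ^ (-θ) = (k : ℝ) ^ (-(θ * (1 - 2 / v))) := by
        rw [← Real.rpow_mul_natCast hk0.le, ← Real.rpow_add hk0]
        congr 1; push_cast; field_simp; ring
      have e2 : ((k : ℝ) ^ (θ / v)) ^ (2 - v) = (k : ℝ) ^ (-(θ * (1 - 2 / v))) := by
        rw [← Real.rpow_mul hk0.le]
        congr 1; field_simp; ring
      have e3 : 0 ≤ (k : ℝ) ^ (-(θ * (1 - 2 / v))) := by positivity
      calc _ = 4 * Cm * (((k : ℝ) ^ (θ / v)) ^ 2 * (k : ℝ) ^ (-θ))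
            + 3 * D * ((k : ℝ) ^ (θ / v)) ^ (2 - v) := by ring
        _ = (4 * Cm + 3 * D) * (k : ℝ) ^ (-(θ * (1 - 2 / v))) := by rw [e1, e2]; ring
        _ ≤ _ := mul_le_mul_of_nonneg_right (by linarith) e3)
  have hbI : ∀ s n, Integrable (fun a => blockSum X s n a ^ 2) P := fun s n =>
    MemLp.integrable_sq (memLp_finsetSum (Finset.range n) fun i _ => hL2 (s + 1 + i))
  have hbase : TailBound P X b (4 / r) := tailBound_of_variance P X hV0 hbI hV (by
    have : 4 / r = 2 * (2 / r) := by ring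
    linarith)
  rcases lt_or_ge r 4 with hr4 | hr4
  · exact ⟨4 / r, by rw [lt_div_iff₀ hr0]; linarith, hbase⟩
  -- for `r ≥ 4` gaps of length `N ^ (4 / (r + 2))` work; the second requirement reduces to
  -- `(r - 2) * (r - 4) ≥ 0`
  set a := 4 / (r + 2) with ha
  have ha0 : 0 < a := by positivity
  have har : a * (r + 2) = 4 := by rw [ha]; field_simp
  have ha1 : a ≤ 1 := by rw [ha, div_le_one (by linarith)]; linarith
  have hc1 : 1 < a * θ + a - 1 := by nlinarith
  have hc2 : 1 < b * v - a * v + a - 1 := by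
    have hbr : r / 2 + 2 < b * r := by
      have : (1 / 2 + 2 / r) * r = r / 2 + 2 := by field_simp
      rw [← this]; gcongr
    have hba : a < b := by
      have h1 : 4 / (r + 2) ≤ 1 / 2 + 2 / r := by
        rw [div_le_iff₀ (by linarith)]
        have : (1 / 2 + 2 / r) * (r + 2) = r / 2 + 3 + 4 / r := by field_simp; ring
        have : 0 < 4 / r := by positivity
        linarith
      linarith
    have h2 : (b - a) * r < (b - a) * v := mul_lt_mul_of_pos_left hrv (by linarith)
    have h3 : r / 2 + 2 - a * r + a - 1 ≥ 1 := by
      have : (r / 2 + 2 - a * r + a - 2) * (r + 2) = (r - 2) * (r - 4) / 2 := by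
        linear_combination (-(r - 1)) * har
      have h5 : 0 ≤ (r - 2) * (r - 4) / 2 := by
        have := mul_nonneg (by linarith : 0 ≤ r - 2) (by linarith : 0 ≤ r - 4)
        linarith
      rw [← this] at h5
      have := nonneg_of_mul_nonneg_left h5 (by linarith : 0 < r + 2)
      linarith
    nlinarith
  set c' := min (a * θ + a - 1) (b * v - a * v + a - 1) with hc'
  have hc'1 : 1 < c' := lt_min hc1 hc2
  have hiter : ∀ J : ℕ, TailBound P X b (min (2 ^ J * (4 / r)) c') := fun J => by
    induction J with
    | zero =>
      intro κ hκ
      obtain ⟨C, hC0, hC⟩ := hbase κ hκ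
      refine ⟨C, hC0, fun N hN s => (hC N hN s).trans ?_⟩
      have hN' : (1 : ℝ) ≤ N := by exact_mod_cast hN
      refine mul_le_mul_of_nonneg_left (Real.rpow_le_rpow_of_exponent_le hN' ?_) hC0
      have := min_le_left (2 ^ 0 * (4 / r)) c'
      linarith
    | succ J ih =>
      have := ih.double P X hX (by linarith) hD0 hint hD hCm (by linarith) hmix ha0 ha1
        (min_le_left _ _) (min_le_right _ _)
      rw [← hc', mul_min_of_nonneg _ _ (by norm_num : (0 : ℝ) ≤ 2), min_assoc,
        min_eq_right (by linarith : c' ≤ 2 * c'), ← mul_assoc, ← pow_succ'] at this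
      exact this
  obtain ⟨J, hJ⟩ := pow_unbounded_of_one_lt (r / 4) (by norm_num : (1 : ℝ) < 2)
  refine ⟨_, lt_min ?_ hc'1, hiter J⟩
  have : r / 4 * (4 / r) = 1 := by field_simp
  rw [← this]
  gcongr

/-- let `(ξ_n)` be a stationary sequence with α-mixing coefficients
`α(n) = O(n^{-θ})`, `θ > r(r+δ)/(2δ)`, and `𝔼|ξ_0|^{r+δ} < ∞` for some `r > 2`, `δ > 0`.
Then for every `u > 0` and `p > 1/r + 1/4`, almost surely
`max_{1 ≤ j ≤ u (k log k)^{1/2}} |∑_{ℓ=k+1}^{k+j} (ξ_ℓ - 𝔼[ξ_0])| = o(k^p)`. -/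
theorem stmt18
    {Ωp : Type*} [MeasurableSpace Ωp] (Pr : Measure Ωp) [IsProbabilityMeasure Pr]
    (ξ : ℕ → Ωp → ℝ) (hξmeas : ∀ n, Measurable (ξ n))
    -- stationarity: joint distributions are shift invariant
    (hstat : ∀ (k mm : ℕ) (s : Fin mm → ℕ),
      Measure.map (fun a (i : Fin mm) => ξ (s i + k) a) Pr
        = Measure.map (fun a (i : Fin mm) => ξ (s i) a) Pr)
    (r δ : ℝ) (hr : 2 < r) (hδ : 0 < δ)
    -- moment condition `𝔼|ξ_0|^{r+δ} < ∞`
    (hmom : Integrable (fun a => |ξ 0 a| ^ (r + δ)) Pr)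
    -- mixing condition `α(n) = O(n^{-θ})` with `θ > r(r+δ)/(2δ)`
    (θ : ℝ) (hθ : r * (r + δ) / (2 * δ) < θ)
    (hmix : ∃ C : ℝ, 0 < C ∧ ∀ k : ℕ, 1 ≤ k → ∀ ℓ : ℕ, ∀ A B : Set Ωp,
      MeasurableSet[sigmaUpTo ξ ℓ] A → MeasurableSet[sigmaFrom ξ (ℓ + k)] B →
      |(Pr (A ∩ B)).toReal - (Pr A).toReal * (Pr B).toReal| ≤ C * (k : ℝ) ^ (-θ)) :
    ∀ u : ℝ, 0 < u → ∀ p : ℝ, 1 / r + 1 / 4 < p →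
      ∀ᵐ a ∂Pr, ∀ ε : ℝ, 0 < ε → ∀ᶠ k : ℕ in atTop, ∀ j : ℕ, 1 ≤ j →
        (j : ℝ) ≤ u * Real.sqrt ((k : ℝ) * Real.log k) →
        |∑ ℓ ∈ Finset.Icc (k + 1) (k + j), (ξ ℓ a - ∫ y, ξ 0 y ∂Pr)|
          ≤ ε * (k : ℝ) ^ p := by
  intro u _ p hp
  obtain ⟨Cm, hCm, hmix⟩ := hmix
  have hv0 : 0 < r + δ := by linarith
  set μ := ∫ y, ξ 0 y ∂Pr with hμ
  set X : ℕ → Ωp → ℝ := fun i a => ξ i a - μ with hXdef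
  have hXm : ∀ i, Measurable (X i) := fun i => (hξmeas i).sub_const μ
  have hid : ∀ k, IdentDistrib (ξ k) (ξ 0) Pr Pr := fun k => by
    refine ⟨(hξmeas k).aemeasurable, (hξmeas 0).aemeasurable, ?_⟩
    have h1 := congrArg (Measure.map fun f : Fin 1 → ℝ => f 0) (hstat k 1 fun _ => 0)
    rw [Measure.map_map (measurable_pi_apply 0) (measurable_pi_lambda _ fun _ => hξmeas _),
      Measure.map_map (measurable_pi_apply 0) (measurable_pi_lambda _ fun _ => hξmeas _)] at h1
    simpa [Function.comp_def] using h1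
  have hLp0 : MemLp (ξ 0) (ENNReal.ofReal (r + δ)) Pr := by
    rw [← integrable_norm_rpow_iff (hξmeas 0).aestronglyMeasurable (by simpa using hv0)
      ENNReal.ofReal_ne_top, ENNReal.toReal_ofReal hv0.le]
    exact hmom
  have hLpξ : ∀ i, MemLp (ξ i) (ENNReal.ofReal (r + δ)) Pr := fun i => (hid i).memLp_iff.2 hLp0
  have hLp : ∀ i, MemLp (X i) (ENNReal.ofReal (r + δ)) Pr := fun i =>
    (hLpξ i).sub (memLp_const μ)
  have hI : ∀ i, Integrable (ξ i) Pr := fun i => (hLpξ i).integrable (by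
    rw [← ENNReal.ofReal_one]; exact ENNReal.ofReal_le_ofReal (by linarith))
  have hX0 : ∀ i, ∫ a, X i a ∂Pr = 0 := fun i => by
    rw [integral_sub (hI i) (integrable_const μ), (hid i).integral_eq]
    simp [hμ]
  have hD : ∀ i, ∫ a, |X i a| ^ (r + δ) ∂Pr ≤ ∫ a, |X 0 a| ^ (r + δ) ∂Pr := fun i => by
    have hm : Measurable fun t : ℝ => |t - μ| ^ (r + δ) := by fun_prop
    exact ((hid i).comp hm).integral_eq.le
  have hmixX : ∀ k : ℕ, 1 ≤ k → ∀ ℓ A B, MeasurableSet[sigmaUpTo X ℓ] A →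
      MeasurableSet[sigmaFrom X (ℓ + k)] B →
      |Pr.real (A ∩ B) - Pr.real A * Pr.real B| ≤ Cm * (k : ℝ) ^ (-θ) :=
    fun k hk ℓ A B hA hB => hmix k hk ℓ A B
      (sigmaUpTo_le X ℓ (sigmaUpTo ξ ℓ)
        (fun i hi => (measurable_sigmaUpTo ξ hi).sub_const μ) A hA)
      (sigmaFrom_le X (ℓ + k) (sigmaFrom ξ (ℓ + k))
        (fun i hi => (measurable_sigmaFrom ξ hi).sub_const μ) B hB)
  -- any exponent strictly between `1 / 2 + 2 / r` and `2 * p` serves as threshold exponent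
  obtain ⟨b, hb1, hb2⟩ : ∃ b, 1 / 2 + 2 / r < b ∧ b < 2 * p := exists_between (by
    have : 2 / r = 2 * (1 / r) := by ring
    linarith)
  have hb0 : 0 < b := by
    have : 0 < 2 / r := by positivity
    linarith
  obtain ⟨c, hc, hT⟩ := tailBound_of_mixing Pr X hXm hX0 (by linarith : 2 < r + δ) hLp hD hCm.le
    hmixX hr (by linarith) (by rwa [add_sub_cancel_left]) hb1
  filter_upwards [ae_eventually_le_of_tailBound Pr X hb0 hb2 hc hT u] with a ha ε hε
  filter_upwards [ha ε hε] with k hk j _ hj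
  have e : ∑ ℓ ∈ Finset.Icc (k + 1) (k + j), (ξ ℓ a - μ) = blockSum X k j a := by
    rw [← Finset.Ico_add_one_right_eq_Icc, Finset.sum_Ico_eq_sum_range,
      show k + j + 1 - (k + 1) = j by omega]
    rfl
  rw [e]
  exact hk j hj
end
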